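/- arXiv:2010.00455 — 18 statements merged into one kernel-verified Lean document; each statement's English description precedes it below -/
import Mathlib

section
/- Let M1 and M2 be finite monoids, let (π1, V1) be an irreducible complex representation of M1, and let (π2, V2) be a finite-dimensional complex representation of M2. Regard V1 ⊗_ℂ V2 as a module over M1 × M2 via (m1, m2)·(v1 ⊗ v2) = π1(m1)v1 ⊗ π2(m2)v2. If W is an (M1 × M2)-invariant subspace of V1 ⊗ V2, then there exists an M2-invariant subspace V2' of V2, unique with this property, such that W equals the image of V1 ⊗ V2' inside V1 ⊗ V2. -/
open scoped TensorProduct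

theorem burnside_aux {V : Type*} [AddCommGroup V] [Module ℂ V] [FiniteDimensional ℂ V]
    [Nontrivial V] (A : Subalgebra ℂ (Module.End ℂ V))
    (h : ∀ p : Submodule ℂ V, (∀ a ∈ A, ∀ v ∈ p, a v ∈ p) → p = ⊥ ∨ p = ⊤) : A = ⊤ := by
  have : IsSimpleModule A V := by
    refine { exists_pair_ne := ⟨⊥, ⊤, bot_ne_top⟩, eq_bot_or_eq_top := fun N => ?_ }
    rcases h (N.restrictScalars ℂ) (fun a ha v hv => N.smul_mem (⟨a, ha⟩ : A) hv) with h | h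
    · left; exact (Submodule.restrictScalars_eq_bot_iff _ _ _).1 h
    · right; exact (Submodule.restrictScalars_eq_top_iff _ _ _).1 h
  rw [eq_top_iff]
  intro T _
  have hb := IsSimpleModule.algebraMap_end_bijective_of_isAlgClosed (A := A) (V := V) ℂ
  let f : Module.End (Module.End A V) V :=
    { toFun := T
      map_add' := T.map_add
      map_smul' := fun g v => by
        obtain ⟨c, rfl⟩ := hb.2 g
        simp }
  obtain ⟨s, hs⟩ := (Module.Finite.fg_top : (⊤ : Submodule ℂ V).FG)
  obtain ⟨r, hr⟩ := jacobson_density f s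
  have : T = r.1 := by
    apply LinearMap.ext_on hs
    intro m hm
    exact hr m hm
  rw [this]; exact r.2

/-- Waldspurger's first lemma for finite monoids: if `(π₁, V₁)` is an irreducible complex
representation of `M₁` and `(π₂, V₂)` a finite-dimensional representation of `M₂`, then every
`(M₁ × M₂)`-invariant subspace `W` of `V₁ ⊗ V₂` has the form `V₁ ⊗ V₂'` for a unique
`M₂`-invariant subspace `V₂'` of `V₂`. -/
theorem stmt0 {M1 M2 : Type*} [Monoid M1] [Monoid M2] [Finite M1] [Finite M2]
    {V1 V2 : Type*} [AddCommGroup V1] [Module ℂ V1] [AddCommGroup V2] [Module ℂ V2]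
    [FiniteDimensional ℂ V2]
    (π1 : Representation ℂ M1 V1) (π2 : Representation ℂ M2 V2)
    (hV1 : Nontrivial V1)
    (hirr : ∀ p : Submodule ℂ V1, (∀ (m : M1), ∀ v ∈ p, π1 m v ∈ p) → p = ⊥ ∨ p = ⊤)
    (W : Submodule ℂ (V1 ⊗[ℂ] V2))
    (hW : ∀ (m1 : M1) (m2 : M2), ∀ w ∈ W, TensorProduct.map (π1 m1) (π2 m2) w ∈ W) :
    ∃! p : Submodule ℂ V2,
      (∀ (m2 : M2), ∀ v ∈ p, π2 m2 v ∈ p) ∧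
      W = LinearMap.range (TensorProduct.map (LinearMap.id : V1 →ₗ[ℂ] V1) p.subtype) := by
  classical
  have := hV1
  obtain ⟨v0, hv0⟩ := exists_ne (0 : V1)
  have hspan : Submodule.span ℂ (Set.range fun m => π1 m v0) = ⊤ := by
    refine (hirr _ ?_).resolve_left ?_
    · intro m v hv
      induction hv using Submodule.span_induction with
      | mem x hx =>
        obtain ⟨m', rfl⟩ := hx
        exact Submodule.subset_span ⟨m * m', by simp⟩
      | zero => simp
      | add x y _ _ hx hy => rw [map_add]; exact Submodule.add_mem _ hx hy
      | smul c x _ hx => rw [map_smul]; exact Submodule.smul_mem _ _ hx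
    · intro hbot
      have : v0 ∈ Submodule.span ℂ (Set.range fun m => π1 m v0) :=
        Submodule.subset_span ⟨1, by simp⟩
      rw [hbot] at this
      exact hv0 (by simpa using this)
  have : FiniteDimensional ℂ V1 :=
    ⟨hspan ▸ Submodule.fg_span (Set.finite_range _)⟩
  have hA : Algebra.adjoin ℂ (Set.range π1) = ⊤ := by
    apply burnside_aux
    intro p hp
    exact hirr p fun m v hv => hp _ (Algebra.subset_adjoin ⟨m, rfl⟩) v hv
  have hT : ∀ T : Module.End ℂ V1, ∀ w ∈ W, LinearMap.rTensor V2 T w ∈ W := by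
    intro T
    have hT : T ∈ Algebra.adjoin ℂ (Set.range π1) := by rw [hA]; trivial
    induction hT using Algebra.adjoin_induction with
    | mem x hx =>
      obtain ⟨m, rfl⟩ := hx
      intro w hw
      have := hW m 1 w hw
      rw [map_one] at this
      exact this
    | algebraMap c =>
      intro w hw
      have : LinearMap.rTensor V2 (algebraMap ℂ (Module.End ℂ V1) c) w = c • w := by
        rw [Algebra.algebraMap_eq_smul_one, LinearMap.rTensor_smul, Module.End.one_eq_id,
          LinearMap.rTensor_id]
        simp
      rw [this]
      exact W.smul_mem _ hw
    | add x y _ _ hx hy =>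
      intro w hw
      rw [LinearMap.rTensor_add]
      exact W.add_mem (hx w hw) (hy w hw)
    | mul x y _ _ hx hy =>
      intro w hw
      rw [LinearMap.rTensor_mul]
      exact hx _ (hy w hw)
  let S : (V1 →ₗ[ℂ] ℂ) → V1 ⊗[ℂ] V2 →ₗ[ℂ] V2 := fun f =>
    (TensorProduct.lid ℂ V2).toLinearMap ∘ₗ LinearMap.rTensor V2 f
  have hS : ∀ f v w, S f (v ⊗ₜ w) = f v • w := fun f v w => by simp [S]
  have hS2 : ∀ (f : V1 →ₗ[ℂ] ℂ) (v : V1) (w : V1 ⊗[ℂ] V2),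
      LinearMap.rTensor V2 (f.smulRight v) w = v ⊗ₜ S f w := by
    intro f v w
    induction w using TensorProduct.induction_on with
    | zero => simp
    | tmul x y => rw [hS]; simp [TensorProduct.smul_tmul]
    | add x y hx hy => rw [map_add, map_add, hx, hy, TensorProduct.tmul_add]
  let p : Submodule ℂ V2 :=
    { carrier := {v | ∀ u : V1, u ⊗ₜ[ℂ] v ∈ W}
      zero_mem' := fun u => by simp
      add_mem' := fun ha hb u => by
        rw [TensorProduct.tmul_add]; exact W.add_mem (ha u) (hb u)
      smul_mem' := fun c x hx u => by
        rw [TensorProduct.tmul_smul]; exact W.smul_mem _ (hx u) }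
  have hp : ∀ v, v ∈ p ↔ ∀ u : V1, u ⊗ₜ[ℂ] v ∈ W := fun v => Iff.rfl
  let b := Module.finBasis ℂ V1
  have hdec : ∀ w : V1 ⊗[ℂ] V2, w = ∑ i, b i ⊗ₜ[ℂ] S (b.coord i) w := by
    intro w
    induction w using TensorProduct.induction_on with
    | zero => simp
    | tmul x y =>
      simp_rw [hS, ← TensorProduct.smul_tmul, ← TensorProduct.sum_tmul]
      congr 1
      exact (b.sum_repr x).symm
    | add x y hx hy =>
      simp_rw [map_add, TensorProduct.tmul_add, Finset.sum_add_distrib]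
      rw [← hx, ← hy]
  refine ⟨p, ⟨?_, ?_⟩, ?_⟩
  · intro m v hv u
    have := hW 1 m _ (hv u)
    simpa using this
  · apply le_antisymm
    · intro w hw
      rw [hdec w]
      refine Submodule.sum_mem _ fun i _ => ?_
      have hmem : S (b.coord i) w ∈ p := fun u => by
        rw [← hS2]; exact hT _ w hw
      exact ⟨b i ⊗ₜ ⟨_, hmem⟩, by simp⟩
    · rintro _ ⟨w, rfl⟩
      induction w using TensorProduct.induction_on with
      | zero => simp
      | tmul x y => simpa using y.2 x
      | add x y hx hy => rw [map_add]; exact W.add_mem hx hy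
  · rintro q ⟨_, hq⟩
    apply le_antisymm
    · intro v hv u
      rw [hq]
      exact ⟨u ⊗ₜ ⟨v, hv⟩, by simp⟩
    · intro v hv
      obtain ⟨f, hf⟩ : ∃ f : V1 →ₗ[ℂ] ℂ, f v0 = 1 := by
        obtain ⟨g, hg⟩ := Module.Projective.exists_dual_ne_zero ℂ hv0
        exact ⟨(g v0)⁻¹ • g, by simp [hg]⟩
      have h1 := hv v0
      rw [hq] at h1
      have h2 : ∀ w ∈ LinearMap.range
          (TensorProduct.map (LinearMap.id : V1 →ₗ[ℂ] V1) q.subtype), S f w ∈ q := by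
        rintro _ ⟨w, rfl⟩
        induction w using TensorProduct.induction_on with
        | zero => simp
        | tmul x y =>
          rw [TensorProduct.map_tmul, hS]
          exact q.smul_mem _ y.2
        | add x y hx hy => rw [map_add, map_add]; exact q.add_mem hx hy
      have h3 := h2 _ h1
      rw [hS, hf, one_smul] at h3
      exact h3
end

section
/- Let M1 and M2 be finite monoids, let (π1, V1) be an irreducible complex representation of M1, and let (σ, W) be a finite-dimensional complex representation of M1 × M2. Suppose that the intersection of the kernels of all M1-equivariant linear maps W → V1 is zero. Then there exists a complex representation (π2', V2') of M2, unique up to isomorphism, such that W is isomorphic to V1 ⊗_ℂ V2' as a representation of M1 × M2 (with M1 acting on the first factor and M2 on the second). -/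
open scoped TensorProduct

universe u


lemma aux_fd {M1 : Type*} [Monoid M1] [Finite M1] {V1 : Type*} [AddCommGroup V1] [Module ℂ V1]
    (π1 : Representation ℂ M1 V1) (hV1 : Nontrivial V1)
    (hirr : ∀ p : Submodule ℂ V1, (∀ (m : M1), ∀ v ∈ p, π1 m v ∈ p) → p = ⊥ ∨ p = ⊤) :
    FiniteDimensional ℂ V1 := by
  obtain ⟨v0, hv0⟩ := exists_ne (0 : V1)
  have h := hirr (Submodule.span ℂ (Set.range fun m => π1 m v0)) (by
    intro m v hv
    induction hv using Submodule.span_induction with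
    | mem x hx =>
      obtain ⟨n, rfl⟩ := hx
      refine Submodule.subset_span ⟨m * n, ?_⟩
      simp
    | zero => simp
    | add x y _ _ hx hy => rw [map_add]; exact Submodule.add_mem _ hx hy
    | smul c x _ hx => rw [map_smul]; exact Submodule.smul_mem _ _ hx)
  rcases h with h | h
  · exfalso
    have : v0 ∈ Submodule.span ℂ (Set.range fun m => π1 m v0) :=
      Submodule.subset_span ⟨1, by simp⟩
    rw [h] at this
    exact hv0 (by simpa using this)
  · exact ⟨by rw [← h]; exact Submodule.fg_span (Set.finite_range _)⟩

lemma aux_burnside {M1 : Type*} [Monoid M1] {V1 : Type*} [AddCommGroup V1] [Module ℂ V1]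
    [FiniteDimensional ℂ V1]
    (π1 : Representation ℂ M1 V1) (hV1 : Nontrivial V1)
    (hirr : ∀ p : Submodule ℂ V1, (∀ (m : M1), ∀ v ∈ p, π1 m v ∈ p) → p = ⊥ ∨ p = ⊤)
    (T : V1 →ₗ[ℂ] V1) : T ∈ Algebra.adjoin ℂ (Set.range (π1 : M1 → Module.End ℂ V1)) := by
  set A : Subalgebra ℂ (Module.End ℂ V1) :=
    Algebra.adjoin ℂ (Set.range (π1 : M1 → Module.End ℂ V1)) with hA
  have hs : IsSimpleModule A V1 := by
    rw [isSimpleModule_iff]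
    refine { eq_bot_or_eq_top := fun p => ?_ }
    have := hirr (p.restrictScalars ℂ) (fun m v hv =>
      p.smul_mem (⟨π1 m, Algebra.subset_adjoin ⟨m, rfl⟩⟩ : A) hv)
    simpa using this
  have hsch := IsSimpleModule.algebraMap_end_bijective_of_isAlgClosed (A := A) (V := V1) ℂ
  let f : Module.End (Module.End A V1) V1 :=
    { toFun := T
      map_add' := T.map_add
      map_smul' := by
        intro g x
        obtain ⟨c, rfl⟩ := hsch.2 g
        exact T.map_smul c x }
  classical
  let b := Module.finBasis ℂ V1
  obtain ⟨r, hr⟩ := jacobson_density (R := A) f (Finset.univ.image b)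
  have : T = r.1 := by
    refine b.ext fun i => ?_
    exact hr (b i) (by simp)
  rw [this]
  exact r.2

lemma aux_unique {M1 M2 : Type*} [Monoid M1] [Monoid M2]
    {V1 : Type*} [AddCommGroup V1] [Module ℂ V1] [FiniteDimensional ℂ V1]
    (π1 : Representation ℂ M1 V1) (hV1 : Nontrivial V1)
    (hirr : ∀ p : Submodule ℂ V1, (∀ (m : M1), ∀ v ∈ p, π1 m v ∈ p) → p = ⊥ ∨ p = ⊤)
    {X Y : Type*} [AddCommGroup X] [Module ℂ X] [AddCommGroup Y] [Module ℂ Y]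
    (π2 : Representation ℂ M2 X) (π3 : Representation ℂ M2 Y)
    (h : V1 ⊗[ℂ] X ≃ₗ[ℂ] V1 ⊗[ℂ] Y)
    (hh : ∀ m1 m2 x, h (TensorProduct.map (π1 m1) (π2 m2) x) =
      TensorProduct.map (π1 m1) (π3 m2) (h x)) :
    ∃ g : X ≃ₗ[ℂ] Y, ∀ m v, g (π2 m v) = π3 m (g v) := by
  obtain ⟨v0, hv0⟩ := exists_ne (0 : V1)
  obtain ⟨φ, hφ⟩ := Module.Projective.exists_dual_eq_one ℂ hv0
  have hT : ∀ T : V1 →ₗ[ℂ] V1, ∀ x, h (T.rTensor X x) = T.rTensor Y (h x) := by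
    intro T
    induction aux_burnside π1 hV1 hirr T using Algebra.adjoin_induction with
    | mem T hT =>
      obtain ⟨m, rfl⟩ := hT
      intro x
      have := hh m 1 x
      rw [map_one, map_one] at this
      exact this
    | algebraMap c =>
      intro x
      have h1 : (algebraMap ℂ (Module.End ℂ V1) c : V1 →ₗ[ℂ] V1) = c • LinearMap.id := rfl
      rw [h1]
      simp [LinearMap.rTensor_smul]
    | add S T _ _ hS hT =>
      intro x
      simp [LinearMap.rTensor_add, hS, hT]
    | mul S T _ _ hS hT =>
      intro x
      simp [LinearMap.rTensor_mul, hS, hT]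
  have hX : ∀ x : V1 ⊗[ℂ] X, v0 ⊗ₜ[ℂ] ((TensorProduct.lid ℂ X) (φ.rTensor X x)) =
      (φ.smulRight v0).rTensor X x := by
    intro x
    induction x with
    | zero => simp
    | add x y hx hy => simp only [map_add, TensorProduct.tmul_add, hx, hy]
    | tmul v x => simp [TensorProduct.smul_tmul]
  have hY : ∀ x : V1 ⊗[ℂ] Y, v0 ⊗ₜ[ℂ] ((TensorProduct.lid ℂ Y) (φ.rTensor Y x)) =
      (φ.smulRight v0).rTensor Y x := by
    intro x
    induction x with
    | zero => simp
    | add x y hx hy => simp only [map_add, TensorProduct.tmul_add, hx, hy]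
    | tmul v x => simp [TensorProduct.smul_tmul]
  have hT' : ∀ T : V1 →ₗ[ℂ] V1, ∀ x, h.symm (T.rTensor Y x) = T.rTensor X (h.symm x) := by
    intro T x
    rw [LinearEquiv.symm_apply_eq, hT, LinearEquiv.apply_symm_apply]
  let g1 : X →ₗ[ℂ] Y := (TensorProduct.lid ℂ Y).toLinearMap ∘ₗ φ.rTensor Y ∘ₗ h.toLinearMap ∘ₗ
    TensorProduct.mk ℂ V1 X v0
  let g2 : Y →ₗ[ℂ] X := (TensorProduct.lid ℂ X).toLinearMap ∘ₗ φ.rTensor X ∘ₗ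
    h.symm.toLinearMap ∘ₗ TensorProduct.mk ℂ V1 Y v0
  have hπ : ∀ m (x : V1 ⊗[ℂ] Y), (TensorProduct.lid ℂ Y) (φ.rTensor Y ((π3 m).lTensor V1 x)) =
      π3 m ((TensorProduct.lid ℂ Y) (φ.rTensor Y x)) := by
    intro m x
    induction x with
    | zero => simp
    | add x y hx hy => simp only [map_add, hx, hy]
    | tmul v x => simp
  refine ⟨LinearEquiv.ofLinearMap g1 g2 ?_ ?_, ?_⟩
  · ext y
    simp [g1, g2, hX, hT, hφ]
  · ext y
    simp [g1, g2, hY, hT', hφ]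
  · intro m v
    have := hh 1 m (v0 ⊗ₜ v)
    rw [map_one] at this
    simp only [TensorProduct.map_tmul, Module.End.one_apply] at this
    simp only [LinearEquiv.coe_ofLinearMap, g1, LinearMap.comp_apply, LinearEquiv.coe_coe,
      TensorProduct.mk_apply, this, ← hπ]
    rfl

lemma aux_exists {M1 M2 : Type*} [Monoid M1] [Monoid M2]
    {V1 : Type u} [AddCommGroup V1] [Module ℂ V1] [FiniteDimensional ℂ V1]
    {W : Type u} [AddCommGroup W] [Module ℂ W]
    (π1 : Representation ℂ M1 V1) (hV1 : Nontrivial V1)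
    (hirr : ∀ p : Submodule ℂ V1, (∀ (m : M1), ∀ v ∈ p, π1 m v ∈ p) → p = ⊥ ∨ p = ⊤)
    (σ : Representation ℂ (M1 × M2) W)
    (hker : ∀ w : W,
      (∀ f : W →ₗ[ℂ] V1,
        (∀ (m1 : M1) (x : W), f (σ (m1, 1) x) = π1 m1 (f x)) → f w = 0) →
      w = 0) :
    ∃ (V2' : Type u) (_ : AddCommGroup V2') (_ : Module ℂ V2')
        (π2' : Representation ℂ M2 V2') (e : W ≃ₗ[ℂ] V1 ⊗[ℂ] V2'),
        ∀ (m1 : M1) (m2 : M2) (w : W),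
          e (σ (m1, m2) w) = TensorProduct.map (π1 m1) (π2' m2) (e w) := by
  obtain ⟨v0, hv0⟩ := exists_ne (0 : V1)
  obtain ⟨φ, hφ⟩ := Module.Projective.exists_dual_eq_one ℂ hv0
  have hext : ∀ w w' : W, (∀ f : W →ₗ[ℂ] V1,
        (∀ (m1 : M1) (x : W), f (σ (m1, 1) x) = π1 m1 (f x)) → f w = f w') → w = w' := by
    intro w w' h
    rw [← sub_eq_zero]
    exact hker _ fun f hf => by rw [map_sub, h f hf, sub_self]
  have hex : ∀ (T : V1 →ₗ[ℂ] V1) (w : W), ∃ w' : W, ∀ f : W →ₗ[ℂ] V1,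
        (∀ (m1 : M1) (x : W), f (σ (m1, 1) x) = π1 m1 (f x)) → f w' = T (f w) := by
    intro T
    induction aux_burnside π1 hV1 hirr T using Algebra.adjoin_induction with
    | mem T hT =>
      obtain ⟨m, rfl⟩ := hT
      exact fun w => ⟨σ (m, 1) w, fun f hf => hf m w⟩
    | algebraMap c => exact fun w => ⟨c • w, fun f hf => by simp [Module.algebraMap_end_apply]⟩
    | add S T _ _ hS hT =>
      intro w
      obtain ⟨a, ha⟩ := hS w
      obtain ⟨b, hb⟩ := hT w
      exact ⟨a + b, fun f hf => by rw [map_add, ha f hf, hb f hf]; rfl⟩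
    | mul S T _ _ hS hT =>
      intro w
      obtain ⟨b, hb⟩ := hT w
      obtain ⟨a, ha⟩ := hS b
      exact ⟨a, fun f hf => by rw [ha f hf, hb f hf]; rfl⟩
  choose R0 hR0 using hex
  let R : (V1 →ₗ[ℂ] V1) →ₗ[ℂ] W →ₗ[ℂ] W := LinearMap.mk₂ ℂ R0
    (fun S T w => hext _ _ fun f hf => by simp [hR0 _ _ f hf])
    (fun c T w => hext _ _ fun f hf => by simp [hR0 _ _ f hf])
    (fun T w w' => hext _ _ fun f hf => by simp [hR0 _ _ f hf])
    (fun c T w => hext _ _ fun f hf => by simp [hR0 _ _ f hf])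
  have hR : ∀ (T : V1 →ₗ[ℂ] V1) (w : W) (f : W →ₗ[ℂ] V1),
      (∀ (m1 : M1) (x : W), f (σ (m1, 1) x) = π1 m1 (f x)) → f (R T w) = T (f w) := hR0
  clear_value R
  have hmul : ∀ S T w, R S (R T w) = R (S ∘ₗ T) w := fun S T w =>
    hext _ _ fun f hf => by simp [hR _ _ f hf]
  have hone : ∀ w, R LinearMap.id w = w := fun w => hext _ _ fun f hf => by simp [hR _ _ f hf]
  have hσ1 : ∀ m w, σ (m, 1) w = R (π1 m) w := fun m w =>
    hext _ _ fun f hf => by simp [hR _ _ f hf, hf]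
  have hcomm : ∀ (m : M2) T w, σ (1, m) (R T w) = R T (σ (1, m) w) := fun m T w =>
    hext _ _ fun f hf => by
      have hf' : ∀ (m1 : M1) (x : W),
          (f ∘ₗ σ (1, m)) (σ (m1, 1) x) = π1 m1 ((f ∘ₗ σ (1, m)) x) := by
        intro m1 x
        simp only [LinearMap.comp_apply]
        rw [← hf, ← Module.End.mul_apply, ← Module.End.mul_apply, ← map_mul, ← map_mul]
        simp
      have := hR T w _ hf'
      simp only [LinearMap.comp_apply] at this
      rw [this, hR _ _ f hf]
  let U : Submodule ℂ W := LinearMap.range (R (φ.smulRight v0))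
  have hU : ∀ (m : M2), ∀ u ∈ U, σ (1, m) u ∈ U := by
    rintro m _ ⟨w, rfl⟩
    exact ⟨σ (1, m) w, (hcomm _ _ _).symm⟩
  have hUE : ∀ u ∈ U, R (φ.smulRight v0) u = u := by
    rintro _ ⟨w, rfl⟩
    rw [hmul]
    congr 2
    ext x
    simp [hφ]
  have hUmem : ∀ (ψ : V1 →ₗ[ℂ] ℂ) w, R (ψ.smulRight v0) w ∈ U := by
    intro ψ w
    refine ⟨R (ψ.smulRight v0) w, ?_⟩
    rw [hmul]
    congr 2
    ext x
    simp [hφ]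
  let π2 : Representation ℂ M2 U :=
    { toFun := fun m => (σ (1, m)).restrict (hU m)
      map_one' := by
        ext u
        have : σ ((1 : M1), (1 : M2)) = 1 := map_one σ
        simp [this]
      map_mul' := by
        intro m n
        ext u
        have : σ ((1 : M1), m * n) = σ (1, m) * σ (1, n) := by
          rw [← map_mul]; simp
        simp [this] }
  have hπ2 : ∀ m (u : U), ((π2 m u : U) : W) = σ (1, m) u := fun m u => rfl
  let b := Module.finBasis ℂ V1
  let F : W →ₗ[ℂ] V1 ⊗[ℂ] U := ∑ i, TensorProduct.mk ℂ V1 U (b i) ∘ₗ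
    (R ((b.coord i).smulRight v0)).codRestrict U (hUmem _)
  let G : V1 ⊗[ℂ] U →ₗ[ℂ] W := TensorProduct.lift (LinearMap.mk₂ ℂ
    (fun (v : V1) (u : U) => R (φ.smulRight v) u)
    (fun v v' u => by
      have : φ.smulRight (v + v') = φ.smulRight v + φ.smulRight v' := by ext; simp
      rw [this]; simp)
    (fun c v u => by
      have : φ.smulRight (c • v) = c • φ.smulRight v := by
        ext; simp [smul_comm c]
      rw [this]; simp)
    (fun v u u' => by simp)
    (fun c v u => by simp))
  have hG : ∀ v (u : U), G (v ⊗ₜ u) = R (φ.smulRight v) u := fun v u => rfl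
  have hF : ∀ w, F w = ∑ i, b i ⊗ₜ ⟨R ((b.coord i).smulRight v0) w, hUmem _ w⟩ := by
    intro w
    simp only [F, LinearMap.sum_apply]
    rfl
  have hGF : ∀ w, G (F w) = w := by
    intro w
    rw [hF, map_sum]
    simp only [hG, hmul]
    rw [← LinearMap.sum_apply, ← map_sum]
    conv_rhs => rw [← hone w]
    congr 2
    ext x
    simp only [LinearMap.sum_apply, LinearMap.comp_apply, LinearMap.smulRight_apply, map_smul, hφ,
      one_smul, LinearMap.id_apply]
    exact b.sum_repr x
  have hFG : ∀ t, F (G t) = t := by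
    intro t
    induction t with
    | zero => simp
    | add x y hx hy => rw [map_add, map_add, hx, hy]
    | tmul v u =>
      rw [hG, hF]
      have : ∀ i, (⟨R ((b.coord i).smulRight v0) (R (φ.smulRight v) u), hUmem _ _⟩ : U) =
          b.coord i v • u := by
        intro i
        ext
        simp only [hmul]
        have : (b.coord i).smulRight v0 ∘ₗ φ.smulRight v = b.coord i v • φ.smulRight v0 := by
          ext x
          simp [smul_smul, mul_comm]
        rw [this]
        simp [hUE u u.2]
      simp only [this, ← TensorProduct.smul_tmul]
      rw [← TensorProduct.sum_tmul]
      congr 1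
      exact b.sum_repr v
  refine ⟨U, inferInstance, inferInstance, π2,
    LinearEquiv.ofLinearMap F G (LinearMap.ext hFG) (LinearMap.ext hGF), ?_⟩
  intro m1 m2 w
  have key : ∀ t, G (TensorProduct.map (π1 m1) (π2 m2) t) = σ (m1, m2) (G t) := by
    intro t
    induction t with
    | zero => simp
    | add x y hx hy => simp only [map_add, hx, hy]
    | tmul v u =>
      have h1 : σ (m1, m2) = σ (m1, 1) * σ (1, m2) := by rw [← map_mul]; simp
      rw [TensorProduct.map_tmul, hG, hG, h1, Module.End.mul_apply, hcomm, hσ1, hmul, hπ2]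
      congr 2
      ext x
      simp
  have := key (F w)
  rw [hGF] at this
  change F (σ (m1, m2) w) = _
  rw [← this, hFG]
  rfl

/-- Waldspurger's second lemma for finite monoids: if `(π₁, V₁)` is an irreducible complex
representation of `M₁` and `(σ, W)` a finite-dimensional representation of `M₁ × M₂` such that
the intersection of the kernels of all `M₁`-equivariant maps `W → V₁` is zero, then
`W ≅ V₁ ⊗ V₂'` as `M₁ × M₂`-representations for some `M₂`-representation `(π₂', V₂')`,
unique up to isomorphism. -/
theorem stmt1 {M1 M2 : Type*} [Monoid M1] [Monoid M2] [Finite M1] [Finite M2]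
    {V1 : Type u} [AddCommGroup V1] [Module ℂ V1]
    {W : Type u} [AddCommGroup W] [Module ℂ W] [FiniteDimensional ℂ W]
    (π1 : Representation ℂ M1 V1)
    (hV1 : Nontrivial V1)
    (hirr : ∀ p : Submodule ℂ V1, (∀ (m : M1), ∀ v ∈ p, π1 m v ∈ p) → p = ⊥ ∨ p = ⊤)
    (σ : Representation ℂ (M1 × M2) W)
    (hker : ∀ w : W,
      (∀ f : W →ₗ[ℂ] V1,
        (∀ (m1 : M1) (x : W), f (σ (m1, 1) x) = π1 m1 (f x)) → f w = 0) →
      w = 0) :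
    (∃ (V2' : Type u) (_ : AddCommGroup V2') (_ : Module ℂ V2')
        (π2' : Representation ℂ M2 V2') (e : W ≃ₗ[ℂ] V1 ⊗[ℂ] V2'),
        ∀ (m1 : M1) (m2 : M2) (w : W),
          e (σ (m1, m2) w) = TensorProduct.map (π1 m1) (π2' m2) (e w)) ∧
    (∀ (V2' V2'' : Type u) [AddCommGroup V2'] [Module ℂ V2']
        [AddCommGroup V2''] [Module ℂ V2'']
        (π2' : Representation ℂ M2 V2') (π2'' : Representation ℂ M2 V2'')
        (e' : W ≃ₗ[ℂ] V1 ⊗[ℂ] V2') (e'' : W ≃ₗ[ℂ] V1 ⊗[ℂ] V2''),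
        (∀ (m1 : M1) (m2 : M2) (w : W),
          e' (σ (m1, m2) w) = TensorProduct.map (π1 m1) (π2' m2) (e' w)) →
        (∀ (m1 : M1) (m2 : M2) (w : W),
          e'' (σ (m1, m2) w) = TensorProduct.map (π1 m1) (π2'' m2) (e'' w)) →
        ∃ g : V2' ≃ₗ[ℂ] V2'',
          ∀ (m2 : M2) (v : V2'), g (π2' m2 v) = π2'' m2 (g v)) := by
  have := aux_fd π1 hV1 hirr
  refine ⟨aux_exists π1 hV1 hirr σ hker, ?_⟩
  intro X Y _ _ _ _ π2 π3 e' e'' h' h''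
  refine aux_unique π1 hV1 hirr π2 π3 (e'.symm.trans e'') ?_
  intro m1 m2 x
  have := h' m1 m2 (e'.symm x)
  rw [LinearEquiv.apply_symm_apply] at this
  rw [← this]
  simp [h'']
end

section
/- Let M be a finite monoid whose complex monoid algebra ℂ[M] is a semisimple ring, and let V and V' be simple ℂ[M]-modules. Then the complex vector space of bilinear forms B : V × V' → ℂ satisfying B(m·v, m·v') = B(v, v') for all m ∈ M, v ∈ V, v' ∈ V' has dimension at most 1. -/
open MonoidAlgebra in
lemma aux_z {M : Type*} [Monoid M] (hM : IsSemisimpleRing (MonoidAlgebra ℂ M)) :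
    ∃ z : MonoidAlgebra ℂ M, z ≠ 0 ∧ ∀ m, of ℂ M m * z = z ∧ z * of ℂ M m = z := by
  let ε : MonoidAlgebra ℂ M →ₐ[ℂ] ℂ := MonoidAlgebra.lift ℂ ℂ M 1
  have hε : ∀ m, ε (of ℂ M m) = 1 := fun m => by simp [ε]
  obtain ⟨I, hI⟩ := exists_isCompl (RingHom.ker ε : Submodule (MonoidAlgebra ℂ M) (MonoidAlgebra ℂ M))
  obtain ⟨k, hk, z, hz, hkz⟩ := Submodule.mem_sup.1
    (show (1 : MonoidAlgebra ℂ M) ∈ _ from hI.sup_eq_top ▸ Submodule.mem_top)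
  have hk' : ε k = 0 := hk
  have hεz : ε z = 1 := by
    have := congrArg ε hkz
    simpa [hk'] using this
  have hker : ∀ x, ε x = 0 → x * z = 0 := fun x hx => by
    have h1 : x * z ∈ (RingHom.ker ε : Submodule (MonoidAlgebra ℂ M) (MonoidAlgebra ℂ M)) := by
      change ε (x * z) = 0
      simp [hx]
    exact Submodule.disjoint_def.1 hI.disjoint _ h1 (I.smul_mem x hz)
  have hker' : ∀ x, ε x = 0 → z * x = 0 := fun x hx => by
    obtain ⟨J, hJ⟩ := exists_isCompl (Submodule.span (MonoidAlgebra ℂ M) {z * x})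
    obtain ⟨y, hy, j, hj, hyj⟩ := Submodule.mem_sup.1
      (show (1 : MonoidAlgebra ℂ M) ∈ _ from hJ.sup_eq_top ▸ Submodule.mem_top)
    obtain ⟨a, rfl⟩ := Submodule.mem_span_singleton.1 hy
    have h0 : (x * a) * z = 0 := hker _ (by simp [hx])
    have h1 : z * x = z * x * j := by
      calc z * x = z * x * (a • (z * x) + j) := by rw [hyj, mul_one]
        _ = z * ((x * a) * z) * x + z * x * j := by simp only [smul_eq_mul]; noncomm_ring
        _ = _ := by rw [h0]; simp
    refine Submodule.disjoint_def.1 hJ.disjoint _ (Submodule.mem_span_singleton_self _) ?_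
    rw [h1]
    exact J.smul_mem _ hj
  refine ⟨z, fun h => by simp [h] at hεz, fun m => ⟨?_, ?_⟩⟩
  · have := hker (of ℂ M m - 1) (by simp only [map_sub, hε, map_one, sub_self])
    rwa [sub_mul, one_mul, sub_eq_zero] at this
  · have := hker' (of ℂ M m - 1) (by simp only [map_sub, hε, map_one, sub_self])
    rwa [mul_sub, mul_one, sub_eq_zero] at this

lemma aux_w {M : Type*} [Monoid M] (hM : IsSemisimpleRing (MonoidAlgebra ℂ M)) :
    ∃ w : M, ∀ x : M, (∃ y, w = x * y) ∧ (∃ y, w = y * x) := by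
  classical
  obtain ⟨z, hz, h⟩ := aux_z hM
  have : z.coeff ≠ 0 := fun h0 => hz (by ext; simp [h0])
  obtain ⟨w, hw⟩ := Finsupp.support_nonempty_iff.2 this
  refine ⟨w, fun x => ⟨?_, ?_⟩⟩
  · rw [← (h x).1] at hw
    have := MonoidAlgebra.support_coeff_single_mul_subset _ _ _ hw
    obtain ⟨y, -, hy⟩ := Finset.mem_image.1 this
    exact ⟨y, hy.symm⟩
  · rw [← (h x).2] at hw
    have := MonoidAlgebra.support_coeff_mul_single_subset _ _ _ hw
    obtain ⟨y, -, hy⟩ := Finset.mem_image.1 this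
    exact ⟨y, hy.symm⟩

lemma aux_e {M : Type*} [Monoid M] [Finite M] (hM : IsSemisimpleRing (MonoidAlgebra ℂ M)) :
    ∃ e : M, e * e = e ∧ (∀ x, e * x = x * e) ∧
      ∀ x : M, (∃ y, e = x * y) ∧ (∃ y, e = y * x) := by
  obtain ⟨w, hw⟩ := aux_w hM
  letI : TopologicalSpace M := ⊥
  haveI : DiscreteTopology M := ⟨rfl⟩
  obtain ⟨e, he, hee⟩ := exists_idempotent_in_compact_subsemigroup (M := M)
    (fun r => continuous_of_discreteTopology)
    {w : M | ∀ x : M, (∃ y, w = x * y) ∧ (∃ y, w = y * x)} ⟨w, hw⟩ (Set.toFinite _).isCompact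
    (fun a ha b hb x => by
      obtain ⟨⟨y, hy⟩, -⟩ := ha x
      obtain ⟨-, ⟨y', hy'⟩⟩ := hb x
      exact ⟨⟨y * b, by rw [hy, mul_assoc]⟩, ⟨a * y', by rw [hy', mul_assoc]⟩⟩)
  replace hee : e * e = e := hee
  have h1 : ∀ x, e * x * e = e * x := fun x => by
    -- right multiplication by `x` maps `Me` onto `Me`
    have hsub : Set.range (fun t => t * e) ⊆ (fun s => s * x) '' Set.range (fun t => t * e) := by
      rintro _ ⟨t, rfl⟩
      obtain ⟨y, hy⟩ := (he (e * x)).2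
      refine ⟨t * y * e, ⟨t * y, rfl⟩, ?_⟩
      simp only
      conv_rhs => rw [hy]
      simp only [mul_assoc]
    have heq := Set.eq_of_subset_of_ncard_le hsub (Set.ncard_image_le (Set.toFinite _)) (Set.toFinite _)
    have : e * x ∈ Set.range (fun t => t * e) := by
      rw [heq]
      exact ⟨e, ⟨1, one_mul e⟩, rfl⟩
    obtain ⟨t, ht⟩ := this
    simp only at ht
    rw [← ht, mul_assoc, hee]
  have h2 : ∀ x, e * x * e = x * e := fun x => by
    have hsub : Set.range (fun t => e * t) ⊆ (fun s => x * s) '' Set.range (fun t => e * t) := by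
      rintro _ ⟨t, rfl⟩
      obtain ⟨y, hy⟩ := (he (x * e)).1
      refine ⟨e * (y * t), ⟨y * t, rfl⟩, ?_⟩
      simp only
      conv_rhs => rw [hy]
      simp only [mul_assoc]
    have heq := Set.eq_of_subset_of_ncard_le hsub (Set.ncard_image_le (Set.toFinite _)) (Set.toFinite _)
    have : x * e ∈ Set.range (fun t => e * t) := by
      rw [heq]
      exact ⟨e, ⟨1, mul_one e⟩, rfl⟩
    obtain ⟨t, ht⟩ := this
    simp only at ht
    rw [mul_assoc, ← ht, ← mul_assoc, hee]
  exact ⟨e, hee, fun x => (h1 x).symm.trans (h2 x), he⟩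

section
variable {M : Type*} [Monoid M]
    {V : Type*} [AddCommGroup V] [Module ℂ V] [Module (MonoidAlgebra ℂ M) V]
    [IsScalarTower ℂ (MonoidAlgebra ℂ M) V]

lemma aux_sub (hV : IsSimpleModule (MonoidAlgebra ℂ M) V)
    (W : Submodule ℂ V) (hW : ∀ m, ∀ v ∈ W, MonoidAlgebra.of ℂ M m • v ∈ W) :
    W = ⊥ ∨ W = ⊤ := by
  let W' : Submodule (MonoidAlgebra ℂ M) V :=
    { carrier := W
      add_mem' := W.add_mem
      zero_mem' := W.zero_mem
      smul_mem' := fun a v hv => by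
        change a • v ∈ W
        replace hv : v ∈ W := hv
        induction a using MonoidAlgebra.induction_on with
        | of m => exact hW m v hv
        | add x y hx hy => rw [add_smul]; exact W.add_mem hx hy
        | smul r x hx => rw [smul_assoc]; exact W.smul_mem r hx }
  have hm : ∀ v, v ∈ W' ↔ v ∈ W := fun v => Iff.rfl
  rcases eq_bot_or_eq_top W' with h | h
  · left; ext v; rw [← hm, h]; simp
  · right; ext v; rw [← hm, h]; simp

lemma aux_act (hV : IsSimpleModule (MonoidAlgebra ℂ M) V) (e : M) (hee : e * e = e)
    (hc : ∀ x, e * x = x * e) :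
    (∀ v : V, MonoidAlgebra.of ℂ M e • v = 0) ∨ (∀ v : V, MonoidAlgebra.of ℂ M e • v = v) := by
  rcases aux_sub hV (LinearMap.ker (Module.toModuleEnd ℂ V (MonoidAlgebra.of ℂ M e))) (by
      intro m v hv
      replace hv : MonoidAlgebra.of ℂ M e • v = 0 := hv
      change MonoidAlgebra.of ℂ M e • MonoidAlgebra.of ℂ M m • v = 0
      rw [smul_smul, ← map_mul, hc, map_mul, mul_smul, hv, smul_zero]) with h | h
  · right
    intro v
    rw [← sub_eq_zero, ← Submodule.mem_bot ℂ, ← h]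
    change MonoidAlgebra.of ℂ M e • (MonoidAlgebra.of ℂ M e • v - v) = 0
    rw [smul_sub, smul_smul, ← map_mul, hee, sub_self]
  · left
    intro v
    have : v ∈ LinearMap.ker (Module.toModuleEnd ℂ V (MonoidAlgebra.of ℂ M e)) := h ▸ Submodule.mem_top
    exact this
end

theorem stmt2 {M : Type*} [Monoid M] [Finite M]
    (hM : IsSemisimpleRing (MonoidAlgebra ℂ M))
    {V V' : Type*} [AddCommGroup V] [Module ℂ V] [Module (MonoidAlgebra ℂ M) V]
    [IsScalarTower ℂ (MonoidAlgebra ℂ M) V]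
    [AddCommGroup V'] [Module ℂ V'] [Module (MonoidAlgebra ℂ M) V']
    [IsScalarTower ℂ (MonoidAlgebra ℂ M) V']
    (hV : IsSimpleModule (MonoidAlgebra ℂ M) V)
    (hV' : IsSimpleModule (MonoidAlgebra ℂ M) V')
    (S : Submodule ℂ (V →ₗ[ℂ] V' →ₗ[ℂ] ℂ))
    (hS : ∀ B : V →ₗ[ℂ] V' →ₗ[ℂ] ℂ, B ∈ S ↔
      ∀ (m : M) (v : V) (v' : V'),
        B ((MonoidAlgebra.of ℂ M m) • v) ((MonoidAlgebra.of ℂ M m) • v') = B v v') :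
    Module.rank ℂ ↥S ≤ 1 := by
  rcases eq_or_ne S ⊥ with hbot | hne
  · subst hbot; simp
  obtain ⟨B₁, hB₁, hB₁0⟩ := (Submodule.ne_bot_iff S).1 hne
  obtain ⟨e, hee, hc, he⟩ := aux_e hM
  have heV : ∀ v : V, MonoidAlgebra.of ℂ M e • v = v := by
    refine (aux_act hV e hee hc).resolve_left fun h => hB₁0 ?_
    ext v v'
    rw [← (hS B₁).1 hB₁ e, h]; simp
  have heV' : ∀ v : V', MonoidAlgebra.of ℂ M e • v = v := by
    refine (aux_act hV' e hee hc).resolve_left fun h => hB₁0 ?_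
    ext v v'
    rw [← (hS B₁).1 hB₁ e, h v']; simp
  have hadj : ∀ B ∈ S, ∀ m, ∃ y, ∀ v v', B (MonoidAlgebra.of ℂ M m • v) v' =
      B v (MonoidAlgebra.of ℂ M y • v') := by
    intro B hB m
    obtain ⟨y, hy⟩ := (he m).1
    refine ⟨y, fun v v' => ?_⟩
    rw [← (hS B).1 hB m v, smul_smul, ← map_mul, ← hy, heV']
  have hadj' : ∀ B ∈ S, ∀ m, ∃ y, ∀ v v', B v (MonoidAlgebra.of ℂ M m • v') =
      B (MonoidAlgebra.of ℂ M y • v) v' := by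
    intro B hB m
    obtain ⟨y, hy⟩ := (he m).1
    refine ⟨y, fun v v' => ?_⟩
    rw [← (hS B).1 hB m _ v', smul_smul, ← map_mul, ← hy, heV]
  have hkerL : ∀ B ∈ S, LinearMap.ker B = ⊥ ∨ B = 0 := by
    intro B hB
    rw [← LinearMap.ker_eq_top]
    refine aux_sub hV _ fun m v hv => ?_
    rw [LinearMap.mem_ker] at hv ⊢
    obtain ⟨y, hy⟩ := hadj B hB m
    ext v'
    rw [hy, hv]; simp
  have hkerR : LinearMap.ker B₁.flip = ⊥ := by
    refine (aux_sub hV' _ fun m v hv => ?_).resolve_right fun h => hB₁0 ?_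
    · rw [LinearMap.mem_ker] at hv ⊢
      obtain ⟨y, hy⟩ := hadj' B₁ hB₁ m
      ext v'
      rw [LinearMap.flip_apply, hy, ← LinearMap.flip_apply, hv]; simp
    · rw [LinearMap.ker_eq_top] at h
      ext v v'
      rw [← LinearMap.flip_apply, h]; simp
  have hkerL1 := (hkerL B₁ hB₁).resolve_right hB₁0
  haveI : FiniteDimensional ℂ V := Module.Finite.trans (MonoidAlgebra ℂ M) V
  haveI : FiniteDimensional ℂ V' := Module.Finite.trans (MonoidAlgebra ℂ M) V'
  haveI : Nontrivial V := IsSimpleModule.nontrivial (MonoidAlgebra ℂ M) V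
  have hfr : Module.finrank ℂ V = Module.finrank ℂ (Module.Dual ℂ V') := by
    apply le_antisymm
    · exact LinearMap.finrank_le_finrank_of_injective (f := B₁) (LinearMap.ker_eq_bot.1 hkerL1)
    · have := LinearMap.finrank_le_finrank_of_injective (f := B₁.flip) (LinearMap.ker_eq_bot.1 hkerR)
      rw [Subspace.dual_finrank_eq]
      exact this.trans (Subspace.dual_finrank_eq (K := ℂ) (V := V)).le
  let E : V ≃ₗ[ℂ] Module.Dual ℂ V' :=
    LinearEquiv.ofInjectiveOfFinrankEq B₁ (LinearMap.ker_eq_bot.1 hkerL1) hfr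
  have hE : ∀ v, E v = B₁ v := fun v => rfl
  refine rank_le_one (⟨B₁, hB₁⟩ : S) fun ⟨B₂, hB₂⟩ => ?_
  obtain ⟨c, hcc⟩ := Module.End.exists_eigenvalue (E.symm.toLinearMap ∘ₗ B₂)
  obtain ⟨v, hv⟩ := hcc.exists_hasEigenvector
  have h1 : E.symm (B₂ v) = c • v := hv.apply_eq_smul
  have h2 : B₂ v = c • B₁ v := by
    rw [LinearEquiv.symm_apply_eq, map_smul, hE] at h1
    exact h1
  refine ⟨c, Subtype.ext ?_⟩
  change c • B₁ = B₂
  have h3 := (hkerL (B₂ - c • B₁) (S.sub_mem hB₂ (S.smul_mem c hB₁))).resolve_left fun h => by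
    apply hv.2
    rw [← Submodule.mem_bot ℂ, ← h, LinearMap.mem_ker]
    simp [h2]
  exact (sub_eq_zero.1 h3).symm
end

section
/- Let M be a finite monoid and N a submonoid of M containing the identity, and suppose both ℂ[M] and ℂ[N] are semisimple rings. Set A = ℂ[M] and B = ℂ[N], so that B is a subalgebra of A. Then for every finite-dimensional B-module W, the induced A-module A ⊗_B W is isomorphic, as an A-module, to the coinduced A-module Hom_B(A, W) consisting of all left-B-linear maps f : A → W, with A acting by (a·f)(x) = f(xa). -/
open scoped TensorProduct

/-- Symmetrizing forms. -/
def IsSymForm {A : Type*} [Ring A] [Algebra ℂ A] (l : A →ₗ[ℂ] ℂ) : Prop :=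
  (∀ a b, l (a * b) = l (b * a)) ∧ ∀ a, (∀ x, l (x * a) = 0) → a = 0

theorem exists_symForm (A : Type*) [Ring A] [Algebra ℂ A] [FiniteDimensional ℂ A]
    [IsSemisimpleRing A] : ∃ l : A →ₗ[ℂ] ℂ, IsSymForm l := by
  obtain ⟨n, d, hd, ⟨e⟩⟩ := IsSemisimpleRing.exists_algEquiv_pi_matrix_of_isAlgClosed ℂ A
  let l' : (∀ i, Matrix (Fin (d i)) (Fin (d i)) ℂ) →ₗ[ℂ] ℂ :=
    ∑ i, (Matrix.traceLinearMap (Fin (d i)) ℂ ℂ) ∘ₗ LinearMap.proj i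
  have hl' : ∀ x, l' x = ∑ i, (x i).trace := by
    intro x; simp [l', LinearMap.sum_apply]
  refine ⟨l' ∘ₗ e.toLinearMap, ?_, ?_⟩
  · intro a b
    simp only [LinearMap.comp_apply, AlgEquiv.toLinearMap_apply, map_mul, hl', Pi.mul_apply]
    exact Finset.sum_congr rfl fun i _ => Matrix.trace_mul_comm _ _
  · intro a ha
    apply e.injective
    rw [map_zero]
    funext i
    refine Matrix.ext_iff_trace_mul_left.2 ?_
    intro x
    have h := ha (e.symm (Pi.single i x))
    simp only [LinearMap.comp_apply, AlgEquiv.toLinearMap_apply, map_mul, hl', Pi.mul_apply,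
      AlgEquiv.apply_symm_apply] at h
    rw [Finset.sum_eq_single i] at h
    · simpa using h
    · intro j _ hj
      simp [Pi.single_eq_of_ne hj]
    · simp

theorem IsSymForm.represent {A : Type*} [Ring A] [Algebra ℂ A] [FiniteDimensional ℂ A]
    {l : A →ₗ[ℂ] ℂ} (hl : IsSymForm l) (f : A →ₗ[ℂ] ℂ) : ∃ y, ∀ x, l (x * y) = f x := by
  let T : A →ₗ[ℂ] (A →ₗ[ℂ] ℂ) := LinearMap.mk₂ ℂ (fun y x => l (x * y))
    (by intros; simp [mul_add]) (by intros; simp) (by intros; simp [add_mul]) (by intros; simp)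
  have hT : Function.Injective T := by
    rw [injective_iff_map_eq_zero]
    intro a ha
    exact hl.2 a fun x => LinearMap.congr_fun ha x
  have hs : Function.Surjective T :=
    (LinearMap.injective_iff_surjective_of_finrank_eq_finrank
      (Subspace.dual_finrank_eq (K := ℂ) (V := A)).symm).1 hT
  obtain ⟨y, hy⟩ := hs f
  exact ⟨y, fun x => LinearMap.congr_fun hy x⟩

theorem main_aux {A : Type*} [Ring A] [Algebra ℂ A] [FiniteDimensional ℂ A]
    [IsSemisimpleRing A] (B : Subalgebra ℂ A) [IsSemisimpleRing B]
    (W : Type*) [AddCommGroup W] [Module ℂ W] [Module ↥B W] [IsScalarTower ℂ ↥B W]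
    (J : Submodule A (A ⊗[ℂ] W))
    (hJ : J = Submodule.span A
      {z : A ⊗[ℂ] W | ∃ (a : A) (b : ↥B) (w : W),
          z = (a * (b : A)) ⊗ₜ[ℂ] w - a ⊗ₜ[ℂ] (b • w)}) :
    ∃ e : ((A ⊗[ℂ] W) ⧸ J) ≃+ (A →ₗ[↥B] W),
      ∀ (a : A) (q : (A ⊗[ℂ] W) ⧸ J) (x : A), e (a • q) x = e q (x * a) := by
  obtain ⟨l, hl⟩ := exists_symForm A
  obtain ⟨m, hm⟩ := exists_symForm B
  have hex : ∀ a : A, ∃ c : B, ∀ b : B, m (b * c) = l (b * a) := by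
    intro a
    exact hm.represent ((l ∘ₗ LinearMap.mulRight ℂ a) ∘ₗ B.val.toLinearMap)
  choose E hE using hex
  have mext : ∀ c d : B, (∀ b, m (b * c) = m (b * d)) → c = d := by
    intro c d h
    rw [← sub_eq_zero]
    refine hm.2 _ fun x => ?_
    rw [mul_sub, map_sub, h, sub_self]
  have lext : ∀ c d : A, (∀ b, l (b * c) = l (b * d)) → c = d := by
    intro c d h
    rw [← sub_eq_zero]
    refine hl.2 _ fun x => ?_
    rw [mul_sub, map_sub, h, sub_self]
  have Eadd : ∀ a a', E (a + a') = E a + E a' := by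
    intro a a'
    refine mext _ _ fun b => ?_
    rw [mul_add, map_add, hE, hE, hE, mul_add, map_add]
  have Esmul : ∀ (r : ℂ) a, E (r • a) = r • E a := by
    intro r a
    refine mext _ _ fun b => ?_
    rw [mul_smul_comm, map_smul, hE, hE, mul_smul_comm, map_smul]
  have Eleft : ∀ (b : B) a, E (b * a) = b * E a := by
    intro b a
    refine mext _ _ fun b' => ?_
    rw [hE, ← mul_assoc b', hE]
    simp [mul_assoc]
  have Eright : ∀ (b : B) a, E (a * b) = E a * b := by
    intro b a
    refine mext _ _ fun b' => ?_
    rw [hE, ← mul_assoc b', hm.1, ← mul_assoc b, hE, ← mul_assoc, hl.1]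
    simp [mul_assoc]
  have hrep : ∀ φ : A →ₗ[B] B, ∃ y, ∀ x, φ x = E (x * y) := by
    intro φ
    obtain ⟨y, hy⟩ := hl.represent (m ∘ₗ φ.restrictScalars ℂ)
    refine ⟨y, fun x => mext _ _ fun b => ?_⟩
    have h := hy (b * x)
    rw [hE, ← mul_assoc, h]
    have : φ ((b : A) * x) = b * φ x := φ.map_smul b x
    simp [this]
  have : Module.Finite B A := Module.Finite.of_restrictScalars_finite ℂ B A
  have : Module.Projective B A := Module.projective_of_isSemisimpleRing _ _
  obtain ⟨n, p, s, -, -, hps⟩ := Module.Finite.exists_comp_eq_id_of_projective B A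
  have hy : ∀ i, ∃ y, ∀ x, s x i = E (x * y) := fun i => hrep (LinearMap.proj i ∘ₗ s)
  choose y hy using hy
  let X : Fin n → A := fun i => p (Pi.single i 1)
  have hX : ∀ a, ∑ i, (E (a * y i) : A) * X i = a := by
    intro a
    have h1 : p (s a) = a := LinearMap.congr_fun hps a
    conv_rhs => rw [← h1, pi_eq_sum_univ' (s a), map_sum]
    refine Finset.sum_congr rfl fun i _ => ?_
    rw [map_smul, hy]
    simp only [X, Subalgebra.smul_def, smul_eq_mul]
  have hX2 : ∀ a, ∑ i, y i * (E (X i * a) : A) = a := by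
    intro a
    refine lext _ _ fun z => ?_
    conv_rhs => rw [← hX z]
    rw [Finset.mul_sum, Finset.sum_mul, map_sum, map_sum]
    refine Finset.sum_congr rfl fun i _ => ?_
    rw [← mul_assoc, hl.1, ← hE, hm.1, hE, mul_assoc]
  let φ : A → (A ⊗[ℂ] W →ₗ[ℂ] W) := fun x => TensorProduct.lift
    (LinearMap.mk₂ ℂ (fun a w => E (x * a) • w)
      (by intros; simp [mul_add, Eadd, add_smul]) (by intros; simp [Esmul])
      (by intros; simp) (by intro c a w; exact smul_algebra_smul_comm c (E (x * a)) w))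
  have hφ : ∀ x a w, φ x (a ⊗ₜ w) = E (x * a) • w := fun x a w => rfl
  have φadd : ∀ x x' t, φ (x + x') t = φ x t + φ x' t := by
    intro x x' t
    induction t with
    | zero => simp
    | tmul a w => simp [hφ, add_mul, Eadd, add_smul]
    | add t u h1 h2 => simp only [map_add, h1, h2]; abel
  have φsmul : ∀ (b : B) x t, φ (b * x) t = b • φ x t := by
    intro b x t
    induction t with
    | zero => simp
    | tmul a w => simp [hφ, mul_assoc, Eleft, mul_smul]
    | add t u h1 h2 => simp only [map_add, h1, h2, smul_add]
  have φA : ∀ x a t, φ x (a • t) = φ (x * a) t := by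
    intro x a t
    induction t with
    | zero => simp
    | tmul a' w => simp [hφ, mul_assoc, TensorProduct.smul_tmul']
    | add t u h1 h2 => simp only [map_add, h1, h2, smul_add]
  have φJ : ∀ t ∈ J, ∀ x, φ x t = 0 := by
    intro t ht
    rw [hJ] at ht
    induction ht using Submodule.span_induction with
    | mem t ht =>
      obtain ⟨a, b, w, rfl⟩ := ht
      intro x
      rw [map_sub, hφ, hφ, ← mul_assoc, Eright, mul_smul, sub_self]
    | zero => simp
    | add t u _ _ h1 h2 => intro x; rw [map_add, h1, h2, add_zero]
    | smul a t _ h => intro x; rw [φA, h]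
  let Φ : A ⊗[ℂ] W → (A →ₗ[B] W) := fun t =>
    { toFun := fun x => φ x t
      map_add' := fun x x' => φadd x x' t
      map_smul' := fun b x => φsmul b x t }
  let Ψ0 : (A →ₗ[B] W) → A ⊗[ℂ] W := fun f => ∑ i, y i ⊗ₜ f (X i)
  let Ψ : (A →ₗ[B] W) →+ (A ⊗[ℂ] W) ⧸ J :=
    AddMonoidHom.mk' (fun f => J.mkQ (Ψ0 f)) (by
      intro f g
      rw [← map_add]
      simp [Ψ0, TensorProduct.tmul_add, Finset.sum_add_distrib])
  have h1 : ∀ f x, φ x (Ψ0 f) = f x := by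
    intro f x
    conv_rhs => rw [← hX x, map_sum]
    simp only [Ψ0, map_sum, hφ]
    exact Finset.sum_congr rfl fun i _ => (f.map_smul _ _).symm
  have hmk : ∀ (a : A) (b : B) (w : W),
      J.mkQ (a ⊗ₜ[ℂ] (b • w)) = J.mkQ ((a * (b : A)) ⊗ₜ[ℂ] w) := by
    intro a b w
    symm
    rw [← sub_eq_zero, ← map_sub]
    refine (Submodule.Quotient.mk_eq_zero J).2 ?_
    rw [hJ]
    exact Submodule.subset_span ⟨a, b, w, rfl⟩
  have h2 : ∀ t, Ψ (Φ t) = J.mkQ t := by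
    intro t
    induction t with
    | zero =>
      have : Φ 0 = 0 := by ext x; exact map_zero (φ x)
      rw [this, map_zero, map_zero]
    | tmul a w =>
      change J.mkQ (∑ i, y i ⊗ₜ (E (X i * a) • w)) = _
      rw [map_sum]
      simp only [hmk]
      rw [← map_sum, ← TensorProduct.sum_tmul, hX2]
    | add t u h1 h2 =>
      have : Φ (t + u) = Φ t + Φ u := by ext x; exact map_add (φ x) t u
      rw [this, map_add, map_add, h1, h2]
  have hbij : Function.Bijective Ψ := by
    constructor
    · rw [injective_iff_map_eq_zero]
      intro f hf
      have := φJ _ ((Submodule.Quotient.mk_eq_zero J).1 hf)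
      ext x
      rw [← h1 f x, this]; rfl
    · intro q
      obtain ⟨t, rfl⟩ := J.mkQ_surjective q
      exact ⟨_, h2 t⟩
  let e := (AddEquiv.ofBijective Ψ hbij).symm
  have he : ∀ t, e (J.mkQ t) = Φ t := by
    intro t
    rw [AddEquiv.symm_apply_eq]
    exact (h2 t).symm
  refine ⟨e, fun a q x => ?_⟩
  obtain ⟨t, rfl⟩ := J.mkQ_surjective q
  rw [← map_smul, he, he]
  exact φA x a t



/-- Let `M` be a finite monoid, `N` a submonoid, with `ℂ[M]` and `ℂ[N]` semisimple.  Let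
`A = ℂ[M]` and `B = ℂ[N] ⊆ A`.  For every finite-dimensional `B`-module `W`, the induced
module `A ⊗_B W` (realized as the quotient of `A ⊗_ℂ W` by the relations
`a·b ⊗ w = a ⊗ b·w` for `b ∈ B`) is isomorphic as an `A`-module to the coinduced module
`Hom_B(A, W)` with the action `(a·f)(x) = f(x·a)`. -/
theorem stmt3 {M : Type*} [Monoid M] [Finite M] (N : Submonoid M)
    (hM : IsSemisimpleRing (MonoidAlgebra ℂ M))
    (hN : IsSemisimpleRing (MonoidAlgebra ℂ ↥N))
    (B : Subalgebra ℂ (MonoidAlgebra ℂ M))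
    (hB : ∀ x : MonoidAlgebra ℂ M,
      x ∈ B ↔ x ∈ Submodule.span ℂ ((⇑(MonoidAlgebra.of ℂ M)) '' (N : Set M)))
    (W : Type*) [AddCommGroup W] [Module ℂ W] [Module ↥B W] [IsScalarTower ℂ ↥B W]
    [FiniteDimensional ℂ W]
    (J : Submodule (MonoidAlgebra ℂ M) ((MonoidAlgebra ℂ M) ⊗[ℂ] W))
    (hJ : J = Submodule.span (MonoidAlgebra ℂ M)
      {z : (MonoidAlgebra ℂ M) ⊗[ℂ] W |
        ∃ (a : MonoidAlgebra ℂ M) (b : ↥B) (w : W),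
          z = (a * (b : MonoidAlgebra ℂ M)) ⊗ₜ[ℂ] w - a ⊗ₜ[ℂ] (b • w)}) :
    ∃ e : (((MonoidAlgebra ℂ M) ⊗[ℂ] W) ⧸ J) ≃+ ((MonoidAlgebra ℂ M) →ₗ[↥B] W),
      ∀ (a : MonoidAlgebra ℂ M) (q : ((MonoidAlgebra ℂ M) ⊗[ℂ] W) ⧸ J)
        (x : MonoidAlgebra ℂ M), e (a • q) x = e q (x * a) := by

  have : Fintype M := Fintype.ofFinite M
  have : FiniteDimensional ℂ (MonoidAlgebra ℂ M) := inferInstance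
  let F : MonoidAlgebra ℂ N →ₐ[ℂ] MonoidAlgebra ℂ M :=
    MonoidAlgebra.mapDomainAlgHom ℂ ℂ N.subtype
  have hF : Function.Injective F := MonoidAlgebra.mapDomain_injective Subtype.val_injective
  have hr : F.range = B := by
    ext x
    rw [hB]
    have hFo : ∀ n : N, F (MonoidAlgebra.of ℂ N n) = MonoidAlgebra.of ℂ M n := by
      intro n
      exact MonoidAlgebra.mapDomain_single
    constructor
    · rintro ⟨z, rfl⟩
      change F z ∈ _
      induction z using MonoidAlgebra.induction_on with
      | of n =>
        rw [hFo]
        exact Submodule.subset_span ⟨n, n.2, rfl⟩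
      | add f g hf hg => rw [map_add]; exact add_mem hf hg
      | smul r f hf => rw [map_smul]; exact Submodule.smul_mem _ _ hf
    · intro hx
      have : Submodule.span ℂ ((⇑(MonoidAlgebra.of ℂ M)) '' (N : Set M)) ≤
          Subalgebra.toSubmodule F.range := by
        rw [Submodule.span_le]
        rintro _ ⟨n, hn, rfl⟩
        exact ⟨_, hFo ⟨n, hn⟩⟩
      exact this hx
  have : IsSemisimpleRing B := by
    subst hr
    exact (AlgEquiv.ofInjective F hF).toRingEquiv.isSemisimpleRing
  exact main_aux B W J hJ
end

section
/- Let M be a finite monoid and N a submonoid of M containing the identity. For every n ∈ N and m ∈ M: (1) N(nm)N = NmN if and only if N(nm) = Nm; (2) N(mn)N = NmN if and only if (mn)N = mN. -/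
theorem stmt4_pow {M : Type*} [Monoid M] (u m v : M) (h : m = u * m * v) (i : ℕ) :
    m = u ^ i * m * v ^ i := by
  induction i with
  | zero => simp
  | succ i ih =>
    calc m = u ^ i * m * v ^ i := ih
      _ = u ^ i * (u * m * v) * v ^ i := by rw [← h]
      _ = u ^ (i + 1) * m * v ^ (i + 1) := by
        rw [pow_succ u, pow_succ' v]; simp only [mul_assoc]

theorem stmt4_rep {M : Type*} [Monoid M] [Finite M] (u : M) :
    ∃ i k : ℕ, u ^ (k + 1 + i) = u ^ i := by
  obtain ⟨i, j, hne, hij⟩ := Finite.exists_ne_map_eq_of_infinite (fun i : ℕ => u ^ i)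
  rcases lt_or_gt_of_ne hne with hl | hl
  · refine ⟨i, j - i - 1, ?_⟩
    rw [show j - i - 1 + 1 + i = j by omega, hij]
  · refine ⟨j, i - j - 1, ?_⟩
    rw [show i - j - 1 + 1 + j = i by omega, hij]

theorem stmt4_left {M : Type*} [Monoid M] [Finite M] (u m v : M) (h : m = u * m * v) :
    ∃ k : ℕ, m = u ^ (k + 1) * m := by
  obtain ⟨i, k, hk⟩ := stmt4_rep u
  refine ⟨k, ?_⟩
  have hi := stmt4_pow u m v h i
  calc m = u ^ i * m * v ^ i := hi
    _ = u ^ (k + 1) * (u ^ i * m * v ^ i) := by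
      rw [← mul_assoc, ← mul_assoc, ← pow_add, hk]
    _ = u ^ (k + 1) * m := by rw [← hi]

theorem stmt4_right {M : Type*} [Monoid M] [Finite M] (u m v : M) (h : m = u * m * v) :
    ∃ k : ℕ, m = m * v ^ (k + 1) := by
  obtain ⟨i, k, hk⟩ := stmt4_rep v
  refine ⟨k, ?_⟩
  have hi := stmt4_pow u m v h i
  calc m = u ^ i * m * v ^ i := hi
    _ = (u ^ i * m * v ^ i) * v ^ (k + 1) := by
      rw [mul_assoc _ (v ^ i), ← pow_add, add_comm i, hk]
    _ = m * v ^ (k + 1) := by rw [← hi]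

/-- Let `M` be a finite monoid and `N` a submonoid.  For `n ∈ N` and `m ∈ M`:
(1) `N(nm)N = NmN ↔ N(nm) = Nm`; (2) `N(mn)N = NmN ↔ (mn)N = mN`. -/
theorem stmt4 {M : Type*} [Monoid M] [Finite M] (N : Submonoid M)
    (n : M) (hn : n ∈ N) (m : M) :
    ({x : M | ∃ a ∈ N, ∃ b ∈ N, x = a * (n * m) * b} =
        {x : M | ∃ a ∈ N, ∃ b ∈ N, x = a * m * b} ↔
      {x : M | ∃ a ∈ N, x = a * (n * m)} = {x : M | ∃ a ∈ N, x = a * m}) ∧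
    ({x : M | ∃ a ∈ N, ∃ b ∈ N, x = a * (m * n) * b} =
        {x : M | ∃ a ∈ N, ∃ b ∈ N, x = a * m * b} ↔
      {x : M | ∃ b ∈ N, x = (m * n) * b} = {x : M | ∃ b ∈ N, x = m * b}) := by
  constructor
  · constructor
    · intro h
      have hm : m ∈ {x : M | ∃ a ∈ N, ∃ b ∈ N, x = a * m * b} :=
        ⟨1, N.one_mem, 1, N.one_mem, by simp⟩
      rw [← h] at hm
      obtain ⟨a, ha, b, hb, hab⟩ := hm
      obtain ⟨k, hk⟩ := stmt4_left (a * n) m b (by rw [mul_assoc a n m]; exact hab)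
      have hk' : m = (a * n) ^ k * a * (n * m) := by
        rw [pow_succ] at hk; simpa only [mul_assoc] using hk
      ext x
      constructor
      · rintro ⟨c, hc, rfl⟩
        exact ⟨c * n, N.mul_mem hc hn, by simp only [mul_assoc]⟩
      · rintro ⟨c, hc, rfl⟩
        refine ⟨c * ((a * n) ^ k * a), N.mul_mem hc
          (N.mul_mem (N.pow_mem (N.mul_mem ha hn) k) ha), ?_⟩
        rw [mul_assoc c, ← hk']
    · intro h
      have hm : m ∈ {x : M | ∃ a ∈ N, x = a * m} := ⟨1, N.one_mem, by simp⟩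
      rw [← h] at hm
      obtain ⟨a, ha, hm⟩ := hm
      ext x
      constructor
      · rintro ⟨c, hc, d, hd, rfl⟩
        exact ⟨c * n, N.mul_mem hc hn, d, hd, by simp only [mul_assoc]⟩
      · rintro ⟨c, hc, d, hd, rfl⟩
        refine ⟨c * a, N.mul_mem hc ha, d, hd, ?_⟩
        rw [mul_assoc c a, ← hm]
  · constructor
    · intro h
      have hm : m ∈ {x : M | ∃ a ∈ N, ∃ b ∈ N, x = a * m * b} :=
        ⟨1, N.one_mem, 1, N.one_mem, by simp⟩
      rw [← h] at hm
      obtain ⟨a, ha, b, hb, hab⟩ := hm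
      obtain ⟨k, hk⟩ := stmt4_right a m (n * b) (by simpa only [mul_assoc] using hab)
      have hk' : m = (m * n) * (b * (n * b) ^ k) := by
        rw [pow_succ'] at hk; simpa only [mul_assoc] using hk
      ext x
      constructor
      · rintro ⟨c, hc, rfl⟩
        exact ⟨n * c, N.mul_mem hn hc, by simp only [mul_assoc]⟩
      · rintro ⟨c, hc, rfl⟩
        refine ⟨(b * (n * b) ^ k) * c, N.mul_mem
          (N.mul_mem hb (N.pow_mem (N.mul_mem hn hb) k)) hc, ?_⟩
        rw [← mul_assoc (m * n), ← hk']
    · intro h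
      have hm : m ∈ {x : M | ∃ b ∈ N, x = m * b} := ⟨1, N.one_mem, by simp⟩
      rw [← h] at hm
      obtain ⟨a, ha, hm⟩ := hm
      ext x
      constructor
      · rintro ⟨c, hc, d, hd, rfl⟩
        exact ⟨c, hc, n * d, N.mul_mem hn hd, by simp only [mul_assoc]⟩
      · rintro ⟨c, hc, d, hd, rfl⟩
        refine ⟨c, hc, a * d, N.mul_mem ha hd, ?_⟩
        rw [← mul_assoc, mul_assoc c (m * n) a, ← hm]
end

section
/- Let M be a finite monoid and N a submonoid of M containing the identity, and let m1, m2 ∈ M. If Nm1 = Nm2, then the sets m1N and m2N have the same cardinality; dually, if m1N = m2N, then the sets Nm1 and Nm2 have the same cardinality. -/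
theorem aux_left {M : Type*} [Monoid M] [Finite M] (N : Submonoid M) (m1 m2 : M)
    (h : {x : M | ∃ a ∈ N, x = a * m1} = {x : M | ∃ a ∈ N, x = a * m2}) :
    {x : M | ∃ b ∈ N, x = m1 * b}.ncard ≤ {x : M | ∃ b ∈ N, x = m2 * b}.ncard := by
  have h1 : m1 ∈ {x : M | ∃ a ∈ N, x = a * m1} := ⟨1, N.one_mem, (one_mul _).symm⟩
  rw [h] at h1
  obtain ⟨a, _, ha⟩ := h1
  refine le_trans (Set.ncard_le_ncard (t := (fun x => a * x) '' {x : M | ∃ b ∈ N, x = m2 * b})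
    ?_ (Set.toFinite _)) (Set.ncard_image_le (Set.toFinite _))
  rintro x ⟨b, hb, rfl⟩
  exact ⟨m2 * b, ⟨b, hb, rfl⟩, by rw [ha]; exact (mul_assoc _ _ _).symm⟩

theorem aux_right {M : Type*} [Monoid M] [Finite M] (N : Submonoid M) (m1 m2 : M)
    (h : {x : M | ∃ b ∈ N, x = m1 * b} = {x : M | ∃ b ∈ N, x = m2 * b}) :
    {x : M | ∃ a ∈ N, x = a * m1}.ncard ≤ {x : M | ∃ a ∈ N, x = a * m2}.ncard := by
  have h1 : m1 ∈ {x : M | ∃ b ∈ N, x = m1 * b} := ⟨1, N.one_mem, (mul_one _).symm⟩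
  rw [h] at h1
  obtain ⟨a, _, ha⟩ := h1
  refine le_trans (Set.ncard_le_ncard (t := (fun x => x * a) '' {x : M | ∃ b ∈ N, x = b * m2})
    ?_ (Set.toFinite _)) (Set.ncard_image_le (Set.toFinite _))
  rintro x ⟨b, hb, rfl⟩
  exact ⟨b * m2, ⟨b, hb, rfl⟩, by rw [ha]; exact mul_assoc _ _ _⟩

/-- Let `M` be a finite monoid and `N` a submonoid.  If `Nm₁ = Nm₂` then `|m₁N| = |m₂N|`;
dually, if `m₁N = m₂N` then `|Nm₁| = |Nm₂|`. -/
theorem stmt5 {M : Type*} [Monoid M] [Finite M] (N : Submonoid M) (m1 m2 : M) :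
    ({x : M | ∃ a ∈ N, x = a * m1} = {x : M | ∃ a ∈ N, x = a * m2} →
      {x : M | ∃ b ∈ N, x = m1 * b}.ncard = {x : M | ∃ b ∈ N, x = m2 * b}.ncard) ∧
    ({x : M | ∃ b ∈ N, x = m1 * b} = {x : M | ∃ b ∈ N, x = m2 * b} →
      {x : M | ∃ a ∈ N, x = a * m1}.ncard = {x : M | ∃ a ∈ N, x = a * m2}.ncard) := by
  exact ⟨fun h => le_antisymm (aux_left N m1 m2 h) (aux_left N m2 m1 h.symm),
    fun h => le_antisymm (aux_right N m1 m2 h) (aux_right N m2 m1 h.symm)⟩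
end

section
/- Let M be a finite monoid, N a submonoid of M containing the identity, and m1, m2 ∈ M with Nm1N = Nm2N. Then: (a) there exists n ∈ N such that the map x ↦ x*n restricts to a bijection from Nm1 onto Nm2; (b) there exists n' ∈ N such that the map x ↦ n'*x restricts to a bijection from m1N onto m2N; (c) the sets G(m1) = {x ∈ M : Nx = Nm1 and xN = m1N} and G(m2) = {x ∈ M : Nx = Nm2 and xN = m2N} have the same cardinality. -/
theorem aux_iter {M : Type*} [Monoid M] (u v m : M) (h : m = u * m * v) (k : ℕ) :
    m = u ^ k * m * v ^ k := by
  induction k with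
  | zero => simp
  | succ k ih =>
    calc m = u ^ k * m * v ^ k := ih
      _ = u ^ k * (u * m * v) * v ^ k := by rw [← h]
      _ = _ := by rw [pow_succ, pow_succ']; simp only [mul_assoc]

theorem aux_left_s6 {M : Type*} [Monoid M] [Finite M] (u v m : M) (h : m = u * m * v) :
    ∃ k : ℕ, u ^ k * u * m = m := by
  obtain ⟨i, j, hij, he⟩ := Finite.exists_ne_map_eq_of_infinite (fun n : ℕ => u ^ n)
  wlog hlt : i < j generalizing i j
  · exact this j i hij.symm he.symm (by omega)
  obtain ⟨k, rfl⟩ := Nat.exists_eq_add_of_lt hlt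
  refine ⟨k, ?_⟩
  have hi := aux_iter u v m h i
  have he' : u ^ k * u * u ^ i = u ^ i := by
    rw [← pow_succ, ← pow_add]
    rw [he]; congr 1; omega
  calc u ^ k * u * m = u ^ k * u * (u ^ i * m * v ^ i) := by rw [← hi]
    _ = (u ^ k * u * u ^ i) * m * v ^ i := by simp only [mul_assoc]
    _ = m := by rw [he', ← hi]

theorem aux_right_s6 {M : Type*} [Monoid M] [Finite M] (u v m : M) (h : m = u * m * v) :
    ∃ k : ℕ, m * (v * v ^ k) = m := by
  obtain ⟨i, j, hij, he⟩ := Finite.exists_ne_map_eq_of_infinite (fun n : ℕ => v ^ n)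
  wlog hlt : i < j generalizing i j
  · exact this j i hij.symm he.symm (by omega)
  obtain ⟨k, rfl⟩ := Nat.exists_eq_add_of_lt hlt
  refine ⟨k, ?_⟩
  have hi := aux_iter u v m h i
  have he' : v ^ i * (v * v ^ k) = v ^ i := by
    rw [← pow_succ', ← pow_add]
    rw [he]; congr 1
  calc m * (v * v ^ k) = (u ^ i * m * v ^ i) * (v * v ^ k) := by rw [← hi]
    _ = u ^ i * m * (v ^ i * (v * v ^ k)) := by simp only [mul_assoc]
    _ = m := by rw [he', ← hi]

theorem aux_key {M : Type*} [Monoid M] [Finite M] (N : Submonoid M) (m1 m2 : M)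
    (h : {x : M | ∃ a ∈ N, ∃ b ∈ N, x = a * m1 * b} =
         {x : M | ∃ a ∈ N, ∃ b ∈ N, x = a * m2 * b}) :
    ∃ a ∈ N, ∃ b ∈ N, ∃ c ∈ N, ∃ d ∈ N,
      m2 = c * m1 * d ∧ a * c * m1 = m1 ∧ m1 * (d * b) = m1 := by
  have h1 : m1 ∈ {x : M | ∃ a ∈ N, ∃ b ∈ N, x = a * m2 * b} := by
    rw [← h]; exact ⟨1, N.one_mem, 1, N.one_mem, by simp⟩
  have h2 : m2 ∈ {x : M | ∃ a ∈ N, ∃ b ∈ N, x = a * m1 * b} := by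
    rw [h]; exact ⟨1, N.one_mem, 1, N.one_mem, by simp⟩
  obtain ⟨a, ha, b, hb, e1⟩ := h1
  obtain ⟨c, hc, d, hd, e2⟩ := h2
  have e : m1 = (a * c) * m1 * (d * b) := by
    conv_lhs => rw [e1, e2]
    simp only [mul_assoc]
  obtain ⟨k, hk⟩ := aux_left_s6 _ _ _ e
  obtain ⟨l, hl⟩ := aux_right_s6 _ _ _ e
  refine ⟨(a * c) ^ k * a, N.mul_mem (N.pow_mem (N.mul_mem ha hc) _) ha,
    b * (d * b) ^ l, N.mul_mem hb (N.pow_mem (N.mul_mem hd hb) _), c, hc, d, hd, e2, ?_, ?_⟩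
  · rw [← mul_assoc] at hk; exact hk
  · rw [← mul_assoc d]; exact hl

theorem aux_setL {M : Type*} [Monoid M] (N : Submonoid M) (x m : M) :
    {y : M | ∃ a ∈ N, y = a * x} = {y : M | ∃ a ∈ N, y = a * m} ↔
      (∃ p ∈ N, x = p * m) ∧ ∃ p ∈ N, m = p * x := by
  constructor
  · intro h
    constructor
    · have : x ∈ {y : M | ∃ a ∈ N, y = a * x} := ⟨1, N.one_mem, by simp⟩
      rw [h] at this; exact this
    · have : m ∈ {y : M | ∃ a ∈ N, y = a * m} := ⟨1, N.one_mem, by simp⟩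
      rw [← h] at this; exact this
  · rintro ⟨⟨p, hp, e⟩, q, hq, e'⟩
    ext y
    constructor
    · rintro ⟨a, ha, rfl⟩
      exact ⟨a * p, N.mul_mem ha hp, by rw [mul_assoc, ← e]⟩
    · rintro ⟨a, ha, rfl⟩
      exact ⟨a * q, N.mul_mem ha hq, by rw [mul_assoc, ← e']⟩

theorem aux_setR {M : Type*} [Monoid M] (N : Submonoid M) (x m : M) :
    {y : M | ∃ a ∈ N, y = x * a} = {y : M | ∃ a ∈ N, y = m * a} ↔
      (∃ p ∈ N, x = m * p) ∧ ∃ p ∈ N, m = x * p := by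
  constructor
  · intro h
    constructor
    · have : x ∈ {y : M | ∃ a ∈ N, y = x * a} := ⟨1, N.one_mem, by simp⟩
      rw [h] at this; exact this
    · have : m ∈ {y : M | ∃ a ∈ N, y = m * a} := ⟨1, N.one_mem, by simp⟩
      rw [← h] at this; exact this
  · rintro ⟨⟨p, hp, e⟩, q, hq, e'⟩
    ext y
    constructor
    · rintro ⟨a, ha, rfl⟩
      exact ⟨p * a, N.mul_mem hp ha, by rw [← mul_assoc, ← e]⟩
    · rintro ⟨a, ha, rfl⟩
      exact ⟨q * a, N.mul_mem hq ha, by rw [← mul_assoc, ← e']⟩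

theorem aux_card {M : Type*} [Monoid M] [Finite M] (N : Submonoid M) (m1 m2 : M)
    (h : {x : M | ∃ a ∈ N, ∃ b ∈ N, x = a * m1 * b} =
         {x : M | ∃ a ∈ N, ∃ b ∈ N, x = a * m2 * b}) :
    {x : M | {y : M | ∃ a ∈ N, y = a * x} = {y : M | ∃ a ∈ N, y = a * m1} ∧
          {y : M | ∃ b ∈ N, y = x * b} = {y : M | ∃ b ∈ N, y = m1 * b}}.ncard ≤
      {x : M | {y : M | ∃ a ∈ N, y = a * x} = {y : M | ∃ a ∈ N, y = a * m2} ∧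
          {y : M | ∃ b ∈ N, y = x * b} = {y : M | ∃ b ∈ N, y = m2 * b}}.ncard := by
  obtain ⟨a, ha, b, hb, c, hc, d, hd, e, hac, hdb⟩ := aux_key N m1 m2 h
  simp only [aux_setL, aux_setR]
  have L : ∀ x, (∃ p ∈ N, x = m1 * p) → a * (c * x) = x := by
    rintro x ⟨p, -, rfl⟩
    rw [← mul_assoc c, ← mul_assoc a, ← mul_assoc a, hac]
  have R : ∀ x, (∃ p ∈ N, x = p * m1) → x * d * b = x := by
    rintro x ⟨p, -, rfl⟩
    rw [mul_assoc p, mul_assoc p, mul_assoc m1, hdb]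
  refine Set.ncard_le_ncard_of_injOn (fun x => c * x * d) ?_ ?_ (Set.toFinite _)
  · rintro x ⟨⟨hx1, p', hp', e2⟩, hx3, q', hq', e4⟩
    have hL := L x hx3
    have hR := R x hx1
    obtain ⟨p, hp, e1⟩ := hx1
    obtain ⟨q, hq, e3⟩ := hx3
    refine ⟨⟨⟨c * p * a, by simp only [N.mul_mem, *], ?_⟩,
      ⟨c * p' * a, by simp only [N.mul_mem, *], ?_⟩⟩,
      ⟨b * q * d, by simp only [N.mul_mem, *], ?_⟩,
      ⟨b * q' * d, by simp only [N.mul_mem, *], ?_⟩⟩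
    · calc c * x * d = c * (p * m1) * d := by rw [← e1]
        _ = c * (p * (a * c * m1)) * d := by rw [hac]
        _ = c * p * a * (c * m1 * d) := by simp only [mul_assoc]
        _ = _ := by rw [← e]
    · calc m2 = c * m1 * d := e
        _ = c * (p' * (a * (c * x))) * d := by rw [hL, ← e2]
        _ = _ := by simp only [mul_assoc]
    · calc c * x * d = c * (m1 * q) * d := by rw [← e3]
        _ = c * (m1 * (d * b) * q) * d := by rw [hdb]
        _ = (c * m1 * d) * (b * q * d) := by simp only [mul_assoc]
        _ = _ := by rw [← e]
    · calc m2 = c * m1 * d := e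
        _ = c * (x * d * b * q') * d := by rw [hR, ← e4]
        _ = _ := by simp only [mul_assoc]
  · rintro x ⟨⟨hx1, -⟩, hx3, -⟩ y ⟨⟨hy1, -⟩, hy3, -⟩ hxy
    have hL := L x hx3
    have hR := R x hx1
    have hL' := L y hy3
    have hR' := R y hy1
    simp only at hxy
    calc x = a * (c * (x * d * b)) := by rw [hR, hL]
      _ = a * (c * x * d) * b := by simp only [mul_assoc]
      _ = a * (c * y * d) * b := by rw [hxy]
      _ = a * (c * (y * d * b)) := by simp only [mul_assoc]
      _ = y := by rw [hR', hL']

/-- Let `M` be a finite monoid, `N` a submonoid, and `m₁, m₂ ∈ M` with `Nm₁N = Nm₂N`.  Then: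
(a) right multiplication by some `n ∈ N` is a bijection from `Nm₁` onto `Nm₂`;
(b) left multiplication by some `n' ∈ N` is a bijection from `m₁N` onto `m₂N`;
(c) the sets `G(m₁) = {x : Nx = Nm₁ ∧ xN = m₁N}` and `G(m₂)` have the same cardinality. -/
theorem stmt6 {M : Type*} [Monoid M] [Finite M] (N : Submonoid M) (m1 m2 : M)
    (h : {x : M | ∃ a ∈ N, ∃ b ∈ N, x = a * m1 * b} =
         {x : M | ∃ a ∈ N, ∃ b ∈ N, x = a * m2 * b}) :
    (∃ n ∈ N, Set.BijOn (fun x => x * n)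
        {x : M | ∃ a ∈ N, x = a * m1} {x : M | ∃ a ∈ N, x = a * m2}) ∧
    (∃ n' ∈ N, Set.BijOn (fun x => n' * x)
        {x : M | ∃ b ∈ N, x = m1 * b} {x : M | ∃ b ∈ N, x = m2 * b}) ∧
    ({x : M | {y : M | ∃ a ∈ N, y = a * x} = {y : M | ∃ a ∈ N, y = a * m1} ∧
          {y : M | ∃ b ∈ N, y = x * b} = {y : M | ∃ b ∈ N, y = m1 * b}}.ncard =
      {x : M | {y : M | ∃ a ∈ N, y = a * x} = {y : M | ∃ a ∈ N, y = a * m2} ∧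
          {y : M | ∃ b ∈ N, y = x * b} = {y : M | ∃ b ∈ N, y = m2 * b}}.ncard) := by
  refine ⟨?_, ?_, le_antisymm (aux_card N m1 m2 h) (aux_card N m2 m1 h.symm)⟩
  · obtain ⟨a, ha, b, hb, c, hc, d, hd, e, hac, hdb⟩ := aux_key N m1 m2 h
    have e' : m1 * d = a * m2 := by
      rw [e, ← mul_assoc, ← mul_assoc, hac]
    refine ⟨d, hd, ?_, ?_, ?_⟩
    · rintro _ ⟨p, hp, rfl⟩
      exact ⟨p * a, N.mul_mem hp ha, by simp only [mul_assoc, e']⟩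
    · rintro _ ⟨p, hp, rfl⟩ _ ⟨q, hq, rfl⟩ hpq
      have := congrArg (· * b) hpq
      simpa only [mul_assoc, hdb] using this
    · rintro _ ⟨p, hp, rfl⟩
      exact ⟨p * c * m1, ⟨p * c, N.mul_mem hp hc, rfl⟩, by simp only [e, mul_assoc]⟩
  · obtain ⟨a, ha, b, hb, c, hc, d, hd, e, hac, hdb⟩ := aux_key N m1 m2 h
    have e' : c * m1 = m2 * b := by
      rw [e, mul_assoc, mul_assoc, hdb]
    refine ⟨c, hc, ?_, ?_, ?_⟩
    · rintro _ ⟨p, hp, rfl⟩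
      exact ⟨b * p, N.mul_mem hb hp, by simp only [← mul_assoc, e']⟩
    · rintro _ ⟨p, hp, rfl⟩ _ ⟨q, hq, rfl⟩ hpq
      have := congrArg (a * ·) hpq
      simpa only [← mul_assoc, hac] using this
    · rintro _ ⟨p, hp, rfl⟩
      exact ⟨m1 * (d * p), ⟨d * p, N.mul_mem hd hp, rfl⟩, by simp only [e, mul_assoc]⟩
end

section
/- Let M be a finite monoid and N a submonoid of M containing the identity. Let n1, n2 ∈ N be regular elements of N, i.e. there exist x1, x2 ∈ N with n1 = n1*x1*n1 and n2 = n2*x2*n2. Then: (1) Nn1 = Nn2 if and only if Mn1 = Mn2; (2) n1N = n2N if and only if n1M = n2M. -/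
theorem aux_left_s7 {M : Type*} [Monoid M] (S : Submonoid M) (n1 n2 : M) :
    {y : M | ∃ a ∈ S, y = a * n1} = {y : M | ∃ a ∈ S, y = a * n2} ↔
      (∃ a ∈ S, n1 = a * n2) ∧ (∃ a ∈ S, n2 = a * n1) := by
  constructor
  · intro h
    constructor
    · exact (Set.ext_iff.1 h n1).1 ⟨1, S.one_mem, (one_mul _).symm⟩
    · exact (Set.ext_iff.1 h n2).2 ⟨1, S.one_mem, (one_mul _).symm⟩
  · rintro ⟨⟨a, ha, h1⟩, ⟨b, hb, h2⟩⟩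
    ext y
    constructor
    · rintro ⟨c, hc, rfl⟩
      exact ⟨c * a, S.mul_mem hc ha, by rw [mul_assoc, ← h1]⟩
    · rintro ⟨c, hc, rfl⟩
      exact ⟨c * b, S.mul_mem hc hb, by rw [mul_assoc, ← h2]⟩

theorem aux_right_s7 {M : Type*} [Monoid M] (S : Submonoid M) (n1 n2 : M) :
    {y : M | ∃ a ∈ S, y = n1 * a} = {y : M | ∃ a ∈ S, y = n2 * a} ↔
      (∃ a ∈ S, n1 = n2 * a) ∧ (∃ a ∈ S, n2 = n1 * a) := by
  constructor
  · intro h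
    constructor
    · exact (Set.ext_iff.1 h n1).1 ⟨1, S.one_mem, (mul_one _).symm⟩
    · exact (Set.ext_iff.1 h n2).2 ⟨1, S.one_mem, (mul_one _).symm⟩
  · rintro ⟨⟨a, ha, h1⟩, ⟨b, hb, h2⟩⟩
    ext y
    constructor
    · rintro ⟨c, hc, rfl⟩
      exact ⟨a * c, S.mul_mem ha hc, by rw [← mul_assoc, ← h1]⟩
    · rintro ⟨c, hc, rfl⟩
      exact ⟨b * c, S.mul_mem hb hc, by rw [← mul_assoc, ← h2]⟩

theorem step_left {M : Type*} [Monoid M] (N : Submonoid M) (n1 n2 : M) (hn1 : n1 ∈ N)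
    (hr2 : ∃ x ∈ N, n2 = n2 * x * n2) : (∃ a ∈ N, n1 = a * n2) ↔ ∃ a : M, n1 = a * n2 := by
  constructor
  · rintro ⟨a, _, h⟩
    exact ⟨a, h⟩
  · rintro ⟨a, h⟩
    obtain ⟨x, hx, e⟩ := hr2
    refine ⟨n1 * x, N.mul_mem hn1 hx, ?_⟩
    calc n1 = a * n2 := h
      _ = a * (n2 * x * n2) := by rw [← e]
      _ = a * n2 * x * n2 := by simp only [mul_assoc]
      _ = n1 * x * n2 := by rw [← h]

theorem step_right {M : Type*} [Monoid M] (N : Submonoid M) (n1 n2 : M) (hn1 : n1 ∈ N)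
    (hr2 : ∃ x ∈ N, n2 = n2 * x * n2) : (∃ a ∈ N, n1 = n2 * a) ↔ ∃ a : M, n1 = n2 * a := by
  constructor
  · rintro ⟨a, _, h⟩
    exact ⟨a, h⟩
  · rintro ⟨a, h⟩
    obtain ⟨x, hx, e⟩ := hr2
    refine ⟨x * n1, N.mul_mem hx hn1, ?_⟩
    calc n1 = n2 * a := h
      _ = (n2 * x * n2) * a := by rw [← e]
      _ = n2 * (x * (n2 * a)) := by simp only [mul_assoc]
      _ = n2 * (x * n1) := by rw [← h]

/-- Let `M` be a finite monoid, `N` a submonoid, and `n₁, n₂ ∈ N` regular elements of `N`.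
Then `Nn₁ = Nn₂ ↔ Mn₁ = Mn₂` and `n₁N = n₂N ↔ n₁M = n₂M`. -/
theorem stmt7 {M : Type*} [Monoid M] [Finite M] (N : Submonoid M)
    (n1 n2 : M) (hn1 : n1 ∈ N) (hn2 : n2 ∈ N)
    (hr1 : ∃ x ∈ N, n1 = n1 * x * n1) (hr2 : ∃ x ∈ N, n2 = n2 * x * n2) :
    ({y : M | ∃ a ∈ N, y = a * n1} = {y : M | ∃ a ∈ N, y = a * n2} ↔
      {y : M | ∃ a : M, y = a * n1} = {y : M | ∃ a : M, y = a * n2}) ∧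
    ({y : M | ∃ b ∈ N, y = n1 * b} = {y : M | ∃ b ∈ N, y = n2 * b} ↔
      {y : M | ∃ b : M, y = n1 * b} = {y : M | ∃ b : M, y = n2 * b}) := by
  have hl := aux_left_s7 (⊤ : Submonoid M) n1 n2
  have hr := aux_right_s7 (⊤ : Submonoid M) n1 n2
  simp only [Submonoid.mem_top, true_and] at hl hr
  constructor
  · rw [hl, aux_left_s7, step_left N n1 n2 hn1 hr2, step_left N n2 n1 hn2 hr1]
  · rw [hr, aux_right_s7, step_right N n1 n2 hn1 hr2, step_right N n2 n1 hn2 hr1]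
end

section
/- Let M be a finite monoid and let N and K be submonoids of M containing the identity. If m, m' ∈ M satisfy NmK = Nm'K, then the sets Nm and Nm' have the same cardinality, and the sets mK and m'K have the same cardinality. -/
theorem stmt8_aux {M : Type*} [Monoid M] [Finite M] (N K : Submonoid M) (m m' : M)
    (h : ∃ a ∈ N, ∃ b ∈ K, m' = a * m * b) :
    {x : M | ∃ a ∈ N, x = a * m'}.ncard ≤ {x : M | ∃ a ∈ N, x = a * m}.ncard ∧
    {x : M | ∃ b ∈ K, x = m' * b}.ncard ≤ {x : M | ∃ b ∈ K, x = m * b}.ncard := by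
  obtain ⟨a, ha, b, hb, rfl⟩ := h
  constructor
  · refine le_trans (Set.ncard_le_ncard (t := (fun x => x * b) '' {x : M | ∃ a ∈ N, x = a * m})
      ?_ (Set.toFinite _)) (Set.ncard_image_le (Set.toFinite _))
    rintro x ⟨c, hc, rfl⟩
    exact ⟨c * a * m, ⟨c * a, N.mul_mem hc ha, rfl⟩, by simp [mul_assoc]⟩
  · refine le_trans (Set.ncard_le_ncard (t := (fun x => a * x) '' {x : M | ∃ b ∈ K, x = m * b})
      ?_ (Set.toFinite _)) (Set.ncard_image_le (Set.toFinite _))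
    rintro x ⟨c, hc, rfl⟩
    exact ⟨m * (b * c), ⟨b * c, K.mul_mem hb hc, rfl⟩, by simp [mul_assoc]⟩

/-- Let `M` be a finite monoid and `N, K` submonoids.  If `NmK = Nm'K` then
`|Nm| = |Nm'|` and `|mK| = |m'K|`. -/
theorem stmt8 {M : Type*} [Monoid M] [Finite M] (N K : Submonoid M) (m m' : M)
    (h : {x : M | ∃ a ∈ N, ∃ b ∈ K, x = a * m * b} =
         {x : M | ∃ a ∈ N, ∃ b ∈ K, x = a * m' * b}) :
    {x : M | ∃ a ∈ N, x = a * m}.ncard = {x : M | ∃ a ∈ N, x = a * m'}.ncard ∧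
    {x : M | ∃ b ∈ K, x = m * b}.ncard = {x : M | ∃ b ∈ K, x = m' * b}.ncard := by
  have h1 : m ∈ {x : M | ∃ a ∈ N, ∃ b ∈ K, x = a * m' * b} :=
    h ▸ ⟨1, N.one_mem, 1, K.one_mem, by simp⟩
  have h2 : m' ∈ {x : M | ∃ a ∈ N, ∃ b ∈ K, x = a * m * b} :=
    h.symm ▸ ⟨1, N.one_mem, 1, K.one_mem, by simp⟩
  have p := stmt8_aux N K m' m h1
  have q := stmt8_aux N K m m' h2
  exact ⟨le_antisymm p.1 q.1, le_antisymm p.2 q.2⟩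
end

section
/- Let M be a finite monoid, let N and K be submonoids of M containing the identity, and let m ∈ M. Then for every m' ∈ M, Nm'K = NmK if and only if there exist n ∈ N and k ∈ K such that m' = n*m*k, N(nm) = Nm, and (mk)K = mK. -/
theorem stmt9_aux {M : Type*} [Monoid M] [Finite M] (u m v : M) (h : m = u * m * v) :
    ∃ d : ℕ, u ^ (d + 1) * m = m ∧ m * v ^ (d + 1) = m := by
  have hp : ∀ i : ℕ, u ^ i * m * v ^ i = m := by
    intro i
    induction i with
    | zero => simp
    | succ i ih =>
      calc u ^ (i + 1) * m * v ^ (i + 1) = u ^ i * (u * m * v) * v ^ i := by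
            rw [pow_succ, pow_succ']; simp only [mul_assoc]
        _ = m := by rw [← h, ih]
  obtain ⟨p, q, hlt, he⟩ : ∃ p q : ℕ, p < q ∧ u ^ p = u ^ q := by
    obtain ⟨p, q, hne, he⟩ := Finite.exists_ne_map_eq_of_infinite (fun i : ℕ => u ^ i)
    rcases lt_or_gt_of_ne hne with hl | hl
    · exact ⟨p, q, hl, he⟩
    · exact ⟨q, p, hl, he.symm⟩
  obtain ⟨d, rfl⟩ : ∃ d, q = d + 1 + p := ⟨q - p - 1, by omega⟩
  have hu : u ^ (d + 1) * m = m := by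
    calc u ^ (d + 1) * m = u ^ (d + 1) * (u ^ p * m * v ^ p) := by rw [hp]
      _ = u ^ (d + 1 + p) * m * v ^ p := by rw [pow_add u (d + 1) p]; simp only [mul_assoc]
      _ = m := by rw [← he, hp]
  refine ⟨d, hu, ?_⟩
  have := hp (d + 1)
  rwa [hu] at this

/-- Let `M` be a finite monoid, `N, K` submonoids, and `m ∈ M`.  For every `m' ∈ M`,
`Nm'K = NmK` iff there are `n ∈ N`, `k ∈ K` with `m' = n*m*k`, `N(nm) = Nm` and `(mk)K = mK`. -/
theorem stmt9 {M : Type*} [Monoid M] [Finite M] (N K : Submonoid M) (m m' : M) :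
    {x : M | ∃ a ∈ N, ∃ b ∈ K, x = a * m' * b} =
      {x : M | ∃ a ∈ N, ∃ b ∈ K, x = a * m * b} ↔
    ∃ n ∈ N, ∃ k ∈ K, m' = n * m * k ∧
      {x : M | ∃ a ∈ N, x = a * (n * m)} = {x : M | ∃ a ∈ N, x = a * m} ∧
      {x : M | ∃ b ∈ K, x = (m * k) * b} = {x : M | ∃ b ∈ K, x = m * b} := by
  constructor
  · intro h
    have h1 : m' ∈ {x : M | ∃ a ∈ N, ∃ b ∈ K, x = a * m * b} := by
      rw [← h]; exact ⟨1, N.one_mem, 1, K.one_mem, by simp⟩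
    have h2 : m ∈ {x : M | ∃ a ∈ N, ∃ b ∈ K, x = a * m' * b} := by
      rw [h]; exact ⟨1, N.one_mem, 1, K.one_mem, by simp⟩
    obtain ⟨n, hn, k, hk, e1⟩ := h1
    obtain ⟨a, ha, b, hb, e2⟩ := h2
    obtain ⟨d, hu, hv⟩ := stmt9_aux (a * n) m (k * b) (by
      rw [e1] at e2; simpa only [mul_assoc] using e2)
    refine ⟨n, hn, k, hk, e1, ?_, ?_⟩
    · ext x
      constructor
      · rintro ⟨c, hc, rfl⟩
        exact ⟨c * n, N.mul_mem hc hn, by simp only [mul_assoc]⟩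
      · rintro ⟨c, hc, rfl⟩
        refine ⟨c * ((a * n) ^ d * a),
          N.mul_mem hc (N.mul_mem (N.pow_mem (N.mul_mem ha hn) d) ha), ?_⟩
        conv_lhs => rw [← hu, pow_succ]
        simp only [mul_assoc]
    · ext x
      constructor
      · rintro ⟨c, hc, rfl⟩
        exact ⟨k * c, K.mul_mem hk hc, by simp only [mul_assoc]⟩
      · rintro ⟨c, hc, rfl⟩
        refine ⟨b * (k * b) ^ d * c,
          K.mul_mem (K.mul_mem hb (K.pow_mem (K.mul_mem hk hb) d)) hc, ?_⟩
        conv_lhs => rw [← hv, pow_succ']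
        simp only [mul_assoc]
  · rintro ⟨n, hn, k, hk, rfl, h1, h2⟩
    have h3 : m ∈ {x : M | ∃ a ∈ N, x = a * (n * m)} := by
      rw [h1]; exact ⟨1, N.one_mem, by simp⟩
    have h4 : m ∈ {x : M | ∃ b ∈ K, x = (m * k) * b} := by
      rw [h2]; exact ⟨1, K.one_mem, by simp⟩
    obtain ⟨a, ha, e1⟩ := h3
    obtain ⟨b, hb, e2⟩ := h4
    have e3 : m = a * (n * m * k) * b := by
      calc m = m * k * b := e2
        _ = (a * (n * m)) * k * b := by rw [← e1]
        _ = _ := by simp only [mul_assoc]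
    ext x
    constructor
    · rintro ⟨c, hc, e, he, rfl⟩
      exact ⟨c * n, N.mul_mem hc hn, k * e, K.mul_mem hk he, by simp only [mul_assoc]⟩
    · rintro ⟨c, hc, e, he, rfl⟩
      refine ⟨c * a, N.mul_mem hc ha, b * e, K.mul_mem hb he, ?_⟩
      conv_lhs => rw [e3]
      simp only [mul_assoc]
end

section
/- Let M be a finite monoid, let N and K be submonoids of M containing the identity, and let m ∈ M. Define L = {x ∈ M : Nx = Nm}, R = {x ∈ M : xK = mK}, H = L ∩ R, and J = {x ∈ M : NxK = NmK}. Then |J| · |H| = |L| · |R| (in particular H is nonempty, since m ∈ H). -/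
def rcl {M : Type*} [Monoid M] (K : Submonoid M) (x : M) : Set M := {y : M | ∃ b ∈ K, y = x * b}

theorem rcl_iff {M : Type*} [Monoid M] (K : Submonoid M) (x y : M) :
    rcl K x = rcl K y ↔ (∃ b ∈ K, x = y * b) ∧ (∃ b ∈ K, y = x * b) := by
  constructor
  · intro h
    have h1 : x ∈ rcl K x := ⟨1, K.one_mem, by simp⟩
    have h2 : y ∈ rcl K y := ⟨1, K.one_mem, by simp⟩
    exact ⟨by rw [h] at h1; exact h1, by rw [← h] at h2; exact h2⟩
  · rintro ⟨⟨b, hb, h1⟩, ⟨c, hc, h2⟩⟩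
    ext z
    constructor
    · rintro ⟨d, hd, rfl⟩
      exact ⟨b * d, K.mul_mem hb hd, by rw [← mul_assoc, ← h1]⟩
    · rintro ⟨d, hd, rfl⟩
      exact ⟨c * d, K.mul_mem hc hd, by rw [← mul_assoc, ← h2]⟩

theorem rcl_mul {M : Type*} [Monoid M] (K : Submonoid M) {x y : M} (a : M)
    (h : rcl K x = rcl K y) : rcl K (a * x) = rcl K (a * y) := by
  rw [rcl_iff] at h ⊢
  obtain ⟨⟨b, hb, h1⟩, ⟨c, hc, h2⟩⟩ := h
  exact ⟨⟨b, hb, by rw [mul_assoc, ← h1]⟩, ⟨c, hc, by rw [mul_assoc, ← h2]⟩⟩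

theorem lcl_iff {M : Type*} [Monoid M] (N : Submonoid M) (x m : M) :
    {y : M | ∃ a ∈ N, y = a * x} = {y : M | ∃ a ∈ N, y = a * m} ↔
      (∃ b ∈ N, x = b * m) ∧ (∃ b ∈ N, m = b * x) := by
  constructor
  · intro h
    have h1 : x ∈ {y : M | ∃ a ∈ N, y = a * x} := ⟨1, N.one_mem, by simp⟩
    have h2 : m ∈ {y : M | ∃ a ∈ N, y = a * m} := ⟨1, N.one_mem, by simp⟩
    exact ⟨by rw [h] at h1; exact h1, by rw [← h] at h2; exact h2⟩
  · rintro ⟨⟨b, hb, h1⟩, ⟨c, hc, h2⟩⟩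
    ext z
    constructor
    · rintro ⟨d, hd, rfl⟩
      exact ⟨d * b, N.mul_mem hd hb, by rw [mul_assoc, ← h1]⟩
    · rintro ⟨d, hd, rfl⟩
      exact ⟨d * c, N.mul_mem hd hc, by rw [mul_assoc, ← h2]⟩

theorem jcl_iff {M : Type*} [Monoid M] (N K : Submonoid M) (x m : M) :
    {y : M | ∃ a ∈ N, ∃ b ∈ K, y = a * x * b} = {y : M | ∃ a ∈ N, ∃ b ∈ K, y = a * m * b} ↔
      (∃ a ∈ N, ∃ b ∈ K, x = a * m * b) ∧ (∃ a ∈ N, ∃ b ∈ K, m = a * x * b) := by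
  constructor
  · intro h
    have h1 : x ∈ {y : M | ∃ a ∈ N, ∃ b ∈ K, y = a * x * b} :=
      ⟨1, N.one_mem, 1, K.one_mem, by simp⟩
    have h2 : m ∈ {y : M | ∃ a ∈ N, ∃ b ∈ K, y = a * m * b} :=
      ⟨1, N.one_mem, 1, K.one_mem, by simp⟩
    exact ⟨by rw [h] at h1; exact h1, by rw [← h] at h2; exact h2⟩
  · rintro ⟨⟨b, hb, b', hb', h1⟩, ⟨c, hc, c', hc', h2⟩⟩
    ext z
    constructor
    · rintro ⟨d, hd, d', hd', rfl⟩
      exact ⟨d * b, N.mul_mem hd hb, b' * d', K.mul_mem hb' hd', by rw [h1]; simp only [mul_assoc]⟩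
    · rintro ⟨d, hd, d', hd', rfl⟩
      refine ⟨d * c, N.mul_mem hd hc, c' * d', K.mul_mem hc' hd', ?_⟩
      conv_lhs => rw [h2]
      simp only [mul_assoc]

theorem exists_idem_pow {M : Type*} [Monoid M] [Finite M] (u : M) :
    ∃ n : ℕ, u ^ (n + 1) * u ^ (n + 1) = u ^ (n + 1) := by
  obtain ⟨i, j, hij, h⟩ : ∃ i j : ℕ, i < j ∧ u ^ i = u ^ j := by
    obtain ⟨i, j, hne, h⟩ := Finite.exists_ne_map_eq_of_infinite (fun n : ℕ => u ^ n)
    rcases lt_or_gt_of_ne hne with h' | h'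
    · exact ⟨i, j, h', h⟩
    · exact ⟨j, i, h', h.symm⟩
  obtain ⟨p, rfl⟩ := Nat.exists_eq_add_of_lt hij
  have key : ∀ t k, i ≤ k → u ^ (k + t * (p + 1)) = u ^ k := by
    intro t
    induction t with
    | zero => simp
    | succ t ih =>
      intro k hk
      obtain ⟨s, rfl⟩ := Nat.exists_eq_add_of_le hk
      rw [show i + s + (t + 1) * (p + 1) = (i + s + t * (p + 1)) + (p + 1) by ring, pow_add,
        ih _ hk, ← pow_add, show i + s + (p + 1) = (i + p + 1) + s by ring, pow_add, ← h, ← pow_add]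
  refine ⟨(i + 1) * (p + 1) - 1, ?_⟩
  have : (i + 1) * (p + 1) - 1 + 1 = (i + 1) * (p + 1) := Nat.sub_add_cancel (by nlinarith)
  rw [this, ← pow_add]
  exact key (i + 1) _ (by nlinarith)

theorem fix_iter {M : Type*} [Monoid M] {u v m : M} (h : m = u * m * v) (n : ℕ) :
    m = u ^ n * m * v ^ n := by
  induction n with
  | zero => simp
  | succ n ih =>
    conv_lhs => rw [ih, h]
    rw [pow_succ u, pow_succ' v]; simp only [mul_assoc]

theorem stab {M : Type*} [Monoid M] [Finite M] {u v m : M} (h : m = u * m * v) :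
    (∃ n : ℕ, u ^ (n + 1) * m = m) ∧ ∃ n : ℕ, m * v ^ (n + 1) = m := by
  constructor
  · obtain ⟨n, hn⟩ := exists_idem_pow u
    refine ⟨n, ?_⟩
    have := fix_iter h (n + 1)
    rw [this, ← mul_assoc, ← mul_assoc, hn]
  · obtain ⟨n, hn⟩ := exists_idem_pow v
    refine ⟨n, ?_⟩
    have := fix_iter h (n + 1)
    rw [this, mul_assoc, hn]

theorem exA {M : Type*} [Monoid M] [Finite M] (N K : Submonoid M) (m x : M)
    (h : (∃ a ∈ N, ∃ b ∈ K, x = a * m * b) ∧ (∃ a ∈ N, ∃ b ∈ K, m = a * x * b)) :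
    ∃ a a' : M, a ∈ N ∧ a' ∈ N ∧ rcl K (a * m) = rcl K x ∧ a' * (a * m) = m := by
  obtain ⟨⟨a, ha, b, hb, h1⟩, ⟨c, hc, d, hd, h2⟩⟩ := h
  have h3 : m = (c * a) * m * (b * d) := by
    conv_lhs => rw [h2, h1]
    simp only [mul_assoc]
  obtain ⟨⟨n, hn⟩, ⟨k, hk⟩⟩ := stab h3
  refine ⟨a, (c * a) ^ n * c, ha, N.mul_mem (N.pow_mem (N.mul_mem hc ha) n) hc, ?_, ?_⟩
  · rw [rcl_iff]
    refine ⟨⟨d * (b * d) ^ k, K.mul_mem hd (K.pow_mem (K.mul_mem hb hd) k), ?_⟩, ⟨b, hb, h1⟩⟩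
    rw [h1]
    conv_lhs => rw [← hk, pow_succ']
    simp only [mul_assoc]
  · conv_rhs => rw [← hn, pow_succ]
    simp only [mul_assoc]

/-- Let `M` be a finite monoid, `N, K` submonoids and `m ∈ M`.  With
`L = {x : Nx = Nm}`, `R = {x : xK = mK}`, `H = L ∩ R` and `J = {x : NxK = NmK}`,
we have `|J|·|H| = |L|·|R|`. -/
theorem stmt10 {M : Type*} [Monoid M] [Finite M] (N K : Submonoid M) (m : M)
    (L R J : Set M)
    (hL : L = {x : M | {y : M | ∃ a ∈ N, y = a * x} = {y : M | ∃ a ∈ N, y = a * m}})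
    (hR : R = {x : M | {y : M | ∃ b ∈ K, y = x * b} = {y : M | ∃ b ∈ K, y = m * b}})
    (hJ : J = {x : M | {y : M | ∃ a ∈ N, ∃ b ∈ K, y = a * x * b} =
                        {y : M | ∃ a ∈ N, ∃ b ∈ K, y = a * m * b}}) :
    J.ncard * (L ∩ R).ncard = L.ncard * R.ncard := by
  have mR : ∀ x, x ∈ R ↔ rcl K x = rcl K m := by intro x; rw [hR]; rfl
  have mL : ∀ x, x ∈ L ↔ (∃ b ∈ N, x = b * m) ∧ (∃ b ∈ N, m = b * x) := by
    intro x; rw [hL]; exact lcl_iff N x m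
  have mJ : ∀ x, x ∈ J ↔
      (∃ a ∈ N, ∃ b ∈ K, x = a * m * b) ∧ (∃ a ∈ N, ∃ b ∈ K, m = a * x * b) := by
    intro x; rw [hJ]; exact jcl_iff N K x m
  have ex : ∀ c : Set M, ∃ p : M × M, ∀ x ∈ J, rcl K x = c →
      p.1 ∈ N ∧ p.2 ∈ N ∧ rcl K (p.1 * m) = rcl K x ∧ p.2 * (p.1 * m) = m := by
    intro c
    by_cases hc : ∃ x ∈ J, rcl K x = c
    · obtain ⟨x, hx, hxc⟩ := hc
      obtain ⟨a, a', h1, h2, h3, h4⟩ := exA N K m x ((mJ x).1 hx)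
      exact ⟨(a, a'), fun y _ hy => ⟨h1, h2, h3.trans (hxc.trans hy.symm), h4⟩⟩
    · exact ⟨(1, 1), fun x hx hxc => (hc ⟨x, hx, hxc⟩).elim⟩
  choose p hp using ex
  have hLJ : ∀ x ∈ L, x ∈ J := by
    intro x hx
    obtain ⟨⟨a, ha, h1⟩, ⟨b, hb, h2⟩⟩ := (mL x).1 hx
    exact (mJ x).2 ⟨⟨a, ha, 1, K.one_mem, by rw [mul_one, ← h1]⟩,
      ⟨b, hb, 1, K.one_mem, by rw [mul_one, ← h2]⟩⟩
  have P : ∀ x ∈ J, (p (rcl K x)).1 ∈ N ∧ (p (rcl K x)).2 ∈ N ∧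
      rcl K ((p (rcl K x)).1 * m) = rcl K x ∧ (p (rcl K x)).2 * ((p (rcl K x)).1 * m) = m :=
    fun x hx => hp _ x hx rfl
  -- fixing facts
  have fixR : ∀ a a' r : M, a' * (a * m) = m → r ∈ R → a' * (a * r) = r := by
    intro a a' r h hr
    obtain ⟨⟨b, -, rfl⟩, -⟩ := (rcl_iff K r m).1 ((mR r).1 hr)
    rw [← mul_assoc a, ← mul_assoc a', h]
  have fixJ : ∀ a a' x : M, a' * (a * m) = m → rcl K (a * m) = rcl K x → a * (a' * x) = x := by
    intro a a' x h hr
    obtain ⟨-, ⟨b, -, rfl⟩⟩ := (rcl_iff K _ _).1 hr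
    rw [← mul_assoc a', h, ← mul_assoc]
  have c1 : ∀ x ∈ J, (p (rcl K x)).2 * x ∈ R := by
    intro x hx
    obtain ⟨h1, h2, h3, h4⟩ := P x hx
    rw [mR, ← rcl_mul K _ h3, h4]
  have c2 : ∀ x ∈ J, ∀ r ∈ R, rcl K ((p (rcl K x)).1 * r) = rcl K x := by
    intro x hx r hr
    obtain ⟨h1, h2, h3, h4⟩ := P x hx
    rw [rcl_mul K _ ((mR r).1 hr), h3]
  let f : M × M → M × M := fun q => ((p (rcl K q.1)).1 * q.2, (p (rcl K q.1)).2 * q.1)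
  have bij : Set.BijOn f (J ×ˢ (L ∩ R)) (L ×ˢ R) := by
    have mf : Set.MapsTo f (J ×ˢ (L ∩ R)) (L ×ˢ R) := by
      rintro ⟨x, h⟩ ⟨hx, hhL, hhR⟩
      refine ⟨?_, c1 x hx⟩
      obtain ⟨h1, h2, h3, h4⟩ := P x hx
      obtain ⟨⟨a, ha, e1⟩, ⟨b, hb, e2⟩⟩ := (mL h).1 hhL
      refine (mL _).2 ⟨⟨(p (rcl K x)).1 * a, N.mul_mem h1 ha, ?_⟩,
        ⟨b * (p (rcl K x)).2, N.mul_mem hb h2, ?_⟩⟩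
      · show (p (rcl K x)).1 * h = _
        rw [mul_assoc, ← e1]
      · show m = b * (p (rcl K x)).2 * ((p (rcl K x)).1 * h)
        rw [mul_assoc, fixR _ _ h h4 hhR, ← e2]
    have mg : Set.MapsTo f (L ×ˢ R) (J ×ˢ (L ∩ R)) := by
      rintro ⟨l, r⟩ ⟨hl, hr⟩
      have hlJ := hLJ l hl
      obtain ⟨h1, h2, h3, h4⟩ := P l hlJ
      refine ⟨?_, ?_, c1 l hlJ⟩
      · obtain ⟨⟨b, hb, e1⟩, ⟨c, hc, e2⟩⟩ := (rcl_iff K r m).1 ((mR r).1 hr)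
        refine (mJ _).2 ⟨⟨_, h1, b, hb, ?_⟩, ⟨_, h2, c, hc, ?_⟩⟩
        · show (p (rcl K l)).1 * r = _
          rw [mul_assoc, ← e1]
        · show m = (p (rcl K l)).2 * ((p (rcl K l)).1 * r) * c
          rw [fixR _ _ r h4 hr, ← e2]
      · obtain ⟨⟨a, ha, e1⟩, ⟨b, hb, e2⟩⟩ := (mL l).1 hl
        refine (mL _).2 ⟨⟨(p (rcl K l)).2 * a, N.mul_mem h2 ha, ?_⟩,
          ⟨b * (p (rcl K l)).1, N.mul_mem hb h1, ?_⟩⟩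
        · show (p (rcl K l)).2 * l = _
          rw [mul_assoc, ← e1]
        · show m = b * (p (rcl K l)).1 * ((p (rcl K l)).2 * l)
          rw [mul_assoc, fixJ _ _ l h4 h3, ← e2]
    have ff : ∀ x ∈ J, ∀ r ∈ R, f (f (x, r)) = (x, r) := by
      intro x hx r hr
      obtain ⟨h1, h2, h3, h4⟩ := P x hx
      simp only [f]
      rw [c2 x hx r hr, fixJ _ _ x h4 h3, fixR _ _ r h4 hr]
    refine Set.InvOn.bijOn (f' := f) ⟨?_, ?_⟩ mf mg
    · rintro ⟨x, h⟩ ⟨hx, -, hh⟩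
      exact ff x hx h hh
    · rintro ⟨x, h⟩ ⟨hx, hh⟩
      exact ff x (hLJ x hx) h hh
  rw [← Set.ncard_prod, ← Set.ncard_prod, ← bij.image_eq, Set.ncard_image_of_injOn bij.injOn]
end

section
/- Let N be a finite monoid such that aN = Na (as subsets of N) for every a ∈ N, and suppose the complex monoid algebra ℂ[N] is a semisimple ring. Let e ∈ N be an idempotent and set G_e = {x ∈ N : Nx = Ne}. Then {n ∈ N : e*n ∈ G_e} = {n ∈ N : n*e ∈ G_e}. -/
/-- Let `N` be a finite monoid with `aN = Na` for all `a`, whose complex monoid algebra is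
semisimple.  For an idempotent `e` with `G_e = {x : Nx = Ne}`, one has
`{n : e*n ∈ G_e} = {n : n*e ∈ G_e}`. -/
theorem stmt11 {N : Type*} [Monoid N] [Finite N]
    (hcentric : ∀ a : N, {y : N | ∃ x : N, y = a * x} = {y : N | ∃ x : N, y = x * a})
    (hss : IsSemisimpleRing (MonoidAlgebra ℂ N))
    (e : N) (he : e * e = e)
    (Ge : Set N)
    (hGe : Ge = {x : N | {y : N | ∃ a : N, y = a * x} = {y : N | ∃ a : N, y = a * e}}) :
    {n : N | e * n ∈ Ge} = {n : N | n * e ∈ Ge} := by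
  have hc : ∀ n : N, e * n = n * e := by
    intro n
    have h1 : e * n ∈ {y : N | ∃ x : N, y = x * e} := by
      rw [← hcentric e]; exact ⟨n, rfl⟩
    have h2 : n * e ∈ {y : N | ∃ x : N, y = e * x} := by
      rw [hcentric e]; exact ⟨n, rfl⟩
    obtain ⟨x, hx⟩ := h1
    obtain ⟨z, hz⟩ := h2
    have h3 : e * n * e = e * n := by rw [hx, mul_assoc, he]
    have h4 : e * (n * e) = n * e := by rw [hz, ← mul_assoc, he]
    rw [← h3, mul_assoc, h4]
  ext n
  simp only [Set.mem_setOf_eq, hc n]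
end

section
/- Let M be a finite monoid and N a centric submonoid of M, and let M/N be the quotient of M by the monoid congruence x ~ y ⟺ Nx = Ny. If M/N is a group (i.e. every element of M/N is invertible), then M is a group (i.e. every element of M is invertible). -/
/-- Let `M` be a finite monoid, `N` a centric submonoid, and `c` the monoid congruence
`x ~ y ↔ Nx = Ny`.  If the quotient monoid `M/N` is a group, then `M` is a group. -/
theorem stmt13 {M : Type*} [Monoid M] [Finite M] (N : Submonoid M)
    (hcentric : ∀ m : M, {x : M | ∃ n ∈ N, x = n * m} = {x : M | ∃ n ∈ N, x = m * n})
    (c : Con M)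
    (hc : ∀ x y : M, c x y ↔
      {z : M | ∃ n ∈ N, z = n * x} = {z : M | ∃ n ∈ N, z = n * y})
    (hgrp : ∀ q : c.Quotient, IsUnit q) :
    ∀ m : M, IsUnit m := by
  intro m
  obtain ⟨b, hb⟩ := (hgrp (m : c.Quotient)).exists_right_inv
  induction b using Con.induction_on with
  | H y =>
    have h1 : c (m * y) 1 := by
      rw [← Con.coe_mul, ← Con.coe_one] at hb
      exact (Con.eq c).1 hb
    have h2 := (hc _ _).1 h1
    have h3 : (1 : M) ∈ {z : M | ∃ n ∈ N, z = n * (m * y)} := by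
      rw [h2]
      exact ⟨1, N.one_mem, by simp⟩
    obtain ⟨n, -, hn⟩ := h3
    have h4 : (m * y) * n = 1 := mul_eq_one_symm hn.symm
    rw [mul_assoc] at h4
    exact ⟨⟨m, y * n, h4, mul_eq_one_symm h4⟩, rfl⟩
end

section
/- Let N be a monoid such that aN = Na (as subsets of N) for every a ∈ N. Then any two idempotents of N commute: if e, f ∈ N satisfy e*e = e and f*f = f, then e*f = f*e. -/
/-- In a monoid `N` with `aN = Na` for every `a`, any two idempotents commute. -/
theorem stmt14 {N : Type*} [Monoid N]
    (hcentric : ∀ a : N, {y : N | ∃ x : N, y = a * x} = {y : N | ∃ x : N, y = x * a})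
    (e f : N) (he : e * e = e) (hf : f * f = f) :
    e * f = f * e := by
  have h1 : e * f ∈ {y : N | ∃ x : N, y = x * e} := by
    rw [← hcentric e]; exact ⟨f, rfl⟩
  have h2 : f * e ∈ {y : N | ∃ x : N, y = e * x} := by
    rw [hcentric e]; exact ⟨f, rfl⟩
  obtain ⟨x, hx⟩ := h1
  obtain ⟨y, hy⟩ := h2
  have h3 : e * f * e = e * f := by rw [hx, mul_assoc, he]
  have h4 : e * (f * e) = f * e := by rw [hy, ← mul_assoc, he]
  rw [← h3, mul_assoc, h4]
end

section
/- Let M be a finite monoid and N a centric submonoid of M. Then for every m ∈ M with N(m*m) = Nm, there exists an idempotent e ∈ M (e*e = e) such that Ne = Nm. Equivalently, the map e ↦ [e] from idempotents of M to idempotents of the quotient monoid M/N (of M by the congruence x ~ y ⟺ Nx = Ny) is surjective. -/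
/-- Let `M` be a finite monoid and `N` a centric submonoid.  For every `m ∈ M` with
`N(m*m) = Nm`, there is an idempotent `e ∈ M` with `Ne = Nm`. -/
theorem stmt15 {M : Type*} [Monoid M] [Finite M] (N : Submonoid M)
    (hcentric : ∀ m : M, {x : M | ∃ n ∈ N, x = n * m} = {x : M | ∃ n ∈ N, x = m * n})
    (m : M)
    (hm : {x : M | ∃ n ∈ N, x = n * (m * m)} = {x : M | ∃ n ∈ N, x = n * m}) :
    ∃ e : M, e * e = e ∧
      {x : M | ∃ n ∈ N, x = n * e} = {x : M | ∃ n ∈ N, x = n * m} := by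
  have hN : ∀ j : ℕ, {x : M | ∃ n ∈ N, x = n * m ^ (j + 1)} = {x : M | ∃ n ∈ N, x = n * m} := by
    intro j
    induction j with
    | zero => simp
    | succ j ih =>
      rw [← ih]
      ext x
      constructor
      · rintro ⟨n, hn, rfl⟩
        have h : n * (m * m) ∈ {x : M | ∃ n ∈ N, x = n * m} := hm ▸ ⟨n, hn, rfl⟩
        obtain ⟨n', hn', h⟩ := h
        refine ⟨n', hn', ?_⟩
        rw [pow_succ' m (j + 1), pow_succ' m j, ← mul_assoc m, ← mul_assoc, h, mul_assoc]
      · rintro ⟨n, hn, rfl⟩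
        have h : n * m ∈ {x : M | ∃ n ∈ N, x = n * (m * m)} := hm ▸ ⟨n, hn, rfl⟩
        obtain ⟨n', hn', h⟩ := h
        refine ⟨n', hn', ?_⟩
        rw [pow_succ' m (j + 1), pow_succ' m j, ← mul_assoc n, h]
        simp only [mul_assoc]
  obtain ⟨a, p, hp, hap⟩ : ∃ a p : ℕ, 0 < p ∧ m ^ (a + p) = m ^ a := by
    obtain ⟨a, b, hab, h⟩ := Finite.exists_ne_map_eq_of_infinite (fun k : ℕ => m ^ k)
    rcases lt_or_gt_of_ne hab with hl | hl
    · exact ⟨a, b - a, by omega, by rw [Nat.add_sub_cancel' hl.le]; exact h.symm⟩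
    · exact ⟨b, a - b, by omega, by rw [Nat.add_sub_cancel' hl.le]; exact h⟩
  have hk : ∀ k : ℕ, m ^ (a + k * p) = m ^ a := by
    intro k
    induction k with
    | zero => simp
    | succ k ih =>
      rw [show a + (k + 1) * p = (a + k * p) + p by ring, pow_add, ih, ← pow_add, hap]
  have hle : a + 1 ≤ (a + 1) * p := Nat.le_mul_of_pos_right _ hp
  obtain ⟨c, hc⟩ : ∃ c, (a + 1) * p = a + c := ⟨(a + 1) * p - a, by omega⟩
  refine ⟨m ^ ((a + 1) * p), ?_, ?_⟩
  · rw [← pow_add]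
    have : (a + 1) * p + (a + 1) * p = (a + (a + 1) * p) + c := by omega
    rw [this, pow_add, hk, ← pow_add, hc]
  · obtain ⟨j, hj⟩ : ∃ j, (a + 1) * p = j + 1 := ⟨(a + 1) * p - 1, by omega⟩
    rw [hj]
    exact hN j
end

section
/- Let M be a finite monoid, N a centric submonoid of M, and (π, V) a simple ℂ[M]-module. Let W be a simple ℂ[N]-submodule of V (for the restricted action of N). For m ∈ M, let mW = π(m)(W) = {π(m)w : w ∈ W}. Then: (1) mW is an N-invariant subspace of V, and either mW = 0 or mW is a simple ℂ[N]-module; (2) if mW ≠ 0, then the restriction of π(m) to W is a linear bijection from W onto mW. -/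
/-- Let `M` be a finite monoid, `N` a centric submonoid, `(π, V)` a simple `ℂ[M]`-module and
`W` a simple `ℂ[N]`-submodule of `V`.  For `m ∈ M`, set `mW = π(m)(W)`.  Then (1) `mW` is
`N`-invariant and is `0` or a simple `ℂ[N]`-module; (2) if `mW ≠ 0` then `π(m)` restricts
to a linear bijection from `W` onto `mW`. -/
theorem stmt16 {M : Type*} [Monoid M] [Finite M] (N : Submonoid M)
    (hcentric : ∀ m : M, {x : M | ∃ n ∈ N, x = n * m} = {x : M | ∃ n ∈ N, x = m * n})
    {V : Type*} [AddCommGroup V] [Module ℂ V]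
    (π : Representation ℂ M V)
    (hVnt : Nontrivial V)
    (hVsimple : ∀ p : Submodule ℂ V, (∀ (m : M), ∀ v ∈ p, π m v ∈ p) → p = ⊥ ∨ p = ⊤)
    (W : Submodule ℂ V)
    (hWinv : ∀ n ∈ N, ∀ v ∈ W, π n v ∈ W)
    (hWne : W ≠ ⊥)
    (hWsimple : ∀ p : Submodule ℂ V, p ≤ W →
      (∀ n ∈ N, ∀ v ∈ p, π n v ∈ p) → p = ⊥ ∨ p = W)
    (m : M) :
    ((∀ n ∈ N, ∀ v ∈ Submodule.map (π m) W, π n v ∈ Submodule.map (π m) W) ∧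
      (Submodule.map (π m) W = ⊥ ∨
        (Submodule.map (π m) W ≠ ⊥ ∧
          ∀ p : Submodule ℂ V, p ≤ Submodule.map (π m) W →
            (∀ n ∈ N, ∀ v ∈ p, π n v ∈ p) → p = ⊥ ∨ p = Submodule.map (π m) W))) ∧
    (Submodule.map (π m) W ≠ ⊥ →
      Set.BijOn (π m) (W : Set V) (Submodule.map (π m) W : Set V)) := by
  have h1 : ∀ n ∈ N, ∃ n' ∈ N, n * m = m * n' := by
    intro n hn
    have : n * m ∈ {x : M | ∃ n ∈ N, x = n * m} := ⟨n, hn, rfl⟩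
    rw [hcentric m] at this
    exact this
  have h2 : ∀ n ∈ N, ∃ n' ∈ N, m * n = n' * m := by
    intro n hn
    have : m * n ∈ {x : M | ∃ n ∈ N, x = m * n} := ⟨n, hn, rfl⟩
    rw [← hcentric m] at this
    exact this
  have key : ∀ p : Submodule ℂ V, (∀ n ∈ N, ∀ v ∈ p, π n v ∈ p) →
      W ⊓ p.comap (π m) = ⊥ ∨ W ⊓ p.comap (π m) = W := by
    intro p hp
    apply hWsimple _ inf_le_left
    rintro n hn v ⟨hv, hv'⟩
    refine ⟨hWinv n hn v hv, ?_⟩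
    obtain ⟨n', hn', e⟩ := h2 n hn
    have e2 : π m (π n v) = π n' (π m v) := by
      rw [← Module.End.mul_apply, ← map_mul, e, map_mul, Module.End.mul_apply]
    change π m (π n v) ∈ p
    rw [e2]
    exact hp n' hn' _ hv'
  refine ⟨⟨?_, ?_⟩, ?_⟩
  · rintro n hn _ ⟨w, hw, rfl⟩
    obtain ⟨n', hn', e⟩ := h1 n hn
    refine ⟨π n' w, hWinv n' hn' w hw, ?_⟩
    rw [← Module.End.mul_apply, ← map_mul, ← e, map_mul, Module.End.mul_apply]
  · by_cases h0 : Submodule.map (π m) W = ⊥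
    · exact Or.inl h0
    refine Or.inr ⟨h0, fun p hpW hp => ?_⟩
    rcases key p hp with h | h
    · left
      rw [eq_bot_iff]
      intro v hv
      obtain ⟨w, hw, rfl⟩ := hpW hv
      have : w ∈ W ⊓ p.comap (π m) := ⟨hw, hv⟩
      rw [h, Submodule.mem_bot] at this
      simp [this]
    · right
      exact le_antisymm hpW (Submodule.map_le_iff_le_comap.2 (inf_eq_left.1 h))
  · intro h0
    refine ⟨fun w hw => ⟨w, hw, rfl⟩, ?_, fun v hv => hv⟩
    rcases key ⊥ (by intro n _ v hv; simp_all) with h | h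
    · intro a ha b hb hab
      have : a - b ∈ W ⊓ (⊥ : Submodule ℂ V).comap (π m) :=
        ⟨W.sub_mem ha hb, by simp [hab]⟩
      rw [h, Submodule.mem_bot] at this
      exact sub_eq_zero.1 this
    · exact absurd (le_bot_iff.1 (Submodule.map_le_iff_le_comap.2 (inf_eq_left.1 h))) h0
end

section
/- Let M be a finite monoid whose complex monoid algebra ℂ[M] is a semisimple ring, let N be a centric submonoid of M, let (π, V) be a simple ℂ[M]-module, and let (σ, W) be a simple ℂ[N]-submodule of the restriction of V to N. Let W̃ be the σ-isotypic component of V as a ℂ[N]-module, i.e. the sum of all simple ℂ[N]-submodules of V isomorphic to W, and let I = {m ∈ M : π(m)(W̃) ⊆ W̃}. Then I is a submonoid of M (containing the identity), and W̃ is a simple ℂ[I]-module. -/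
namespace Stmt17Aux

variable {M : Type*} [Monoid M] {V : Type*} [AddCommGroup V] [Module ℂ V]

def Inv (π : Representation ℂ M V) (N : Submonoid M) (p : Submodule ℂ V) : Prop :=
  ∀ n ∈ N, ∀ v ∈ p, π n v ∈ p

def Smp (π : Representation ℂ M V) (N : Submonoid M) (p : Submodule ℂ V) : Prop :=
  p ≠ ⊥ ∧ ∀ q : Submodule ℂ V, q ≤ p → Inv π N q → q = ⊥ ∨ q = p

def Iso (π : Representation ℂ M V) (N : Submonoid M) (p q : Submodule ℂ V) : Prop :=
  ∃ f : p ≃ₗ[ℂ] q, ∀ n ∈ N, ∀ x y : p, (y : V) = π n x → (f y : V) = π n (f x)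

def Comp (π : Representation ℂ M V) (N : Submonoid M) (p : Submodule ℂ V) : Submodule ℂ V :=
  sSup {q | Inv π N q ∧ Iso π N q p}

abbrev RA (π : Representation ℂ M V) (N : Submonoid M) : Subalgebra ℂ (Module.End ℂ V) :=
  Algebra.adjoin ℂ (π '' (N : Set M))

variable {π : Representation ℂ M V} {N : Submonoid M}

lemma Iso.symm {p q : Submodule ℂ V} (hp : Inv π N p) (h : Iso π N p q) : Iso π N q p := by
  obtain ⟨f, hf⟩ := h
  refine ⟨f.symm, fun n hn x y hxy => ?_⟩
  have h1 := hf n hn (f.symm x) ⟨π n (f.symm x), hp n hn _ (f.symm x).2⟩ rfl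
  rw [f.apply_symm_apply, ← hxy] at h1
  have h2 := Subtype.ext h1
  rw [← h2, f.symm_apply_apply]

lemma Iso.trans {p q r : Submodule ℂ V} (h : Iso π N p q) (h' : Iso π N q r) : Iso π N p r := by
  obtain ⟨f, hf⟩ := h
  obtain ⟨g, hg⟩ := h'
  exact ⟨f.trans g, fun n hn x y hxy => hg n hn _ _ (hf n hn x y hxy)⟩

lemma Inv.adj {p : Submodule ℂ V} (hp : Inv π N p) {a : Module.End ℂ V} (ha : a ∈ RA π N) :
    ∀ v ∈ p, a v ∈ p := by
  induction ha using Algebra.adjoin_induction with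
  | mem x hx => obtain ⟨n, hn, rfl⟩ := hx; exact hp n hn
  | algebraMap r => intro v hv; exact p.smul_mem r hv
  | add x y _ _ hx hy => intro v hv; exact p.add_mem (hx v hv) (hy v hv)
  | mul x y _ _ hx hy => intro v hv; exact hx _ (hy v hv)

def toA (p : Submodule ℂ V) (hp : Inv π N p) : Submodule (RA π N) V where
  carrier := p
  add_mem' := p.add_mem
  zero_mem' := p.zero_mem
  smul_mem' a v hv := hp.adj a.2 v hv

def ofA (S : Submodule (RA π N) V) : Submodule ℂ V where
  carrier := S
  add_mem' := S.add_mem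
  zero_mem' := S.zero_mem
  smul_mem' c v hv := S.smul_mem (algebraMap ℂ (RA π N) c) hv

lemma ofA_inv (S : Submodule (RA π N) V) : Inv π N (ofA S) := fun n hn _ hv =>
  S.smul_mem (⟨π n, Algebra.subset_adjoin ⟨n, hn, rfl⟩⟩ : RA π N) hv

lemma Smp.toA {p : Submodule ℂ V} (hp : Inv π N p) (h : Smp π N p) :
    IsSimpleModule (RA π N) (toA p hp) := by
  rw [isSimpleModule_iff_isAtom]
  refine ⟨fun h0 => h.1 ?_, fun S hS => ?_⟩
  · refine (Submodule.eq_bot_iff _).2 fun x hx => ?_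
    have : x ∈ Stmt17Aux.toA p hp := hx
    rw [h0] at this
    exact this
  · rcases h.2 (ofA S) (fun x hx => hS.le hx) (ofA_inv S) with h1 | h1
    · refine (Submodule.eq_bot_iff _).2 fun x hx => ?_
      have : x ∈ ofA S := hx
      rw [h1] at this
      exact this
    · exfalso
      refine hS.not_ge fun x hx => ?_
      have : x ∈ p := hx
      rw [← h1] at this
      exact this

lemma Iso.toA {p q : Submodule ℂ V} (hp : Inv π N p) (hq : Inv π N q) (h : Iso π N p q) :
    Nonempty (toA p hp ≃ₗ[RA π N] toA q hq) := by
  obtain ⟨f, hf⟩ := h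
  have key : ∀ a ∈ RA π N, ∀ x y : p, (y : V) = a x → (f y : V) = a (f x) := by
    intro a ha
    induction ha using Algebra.adjoin_induction with
    | mem x hx => obtain ⟨n, hn, rfl⟩ := hx; exact hf n hn
    | algebraMap r =>
      intro x y hxy
      have : y = r • x := Subtype.ext hxy
      rw [this, map_smul]; rfl
    | add a b ha hb iha ihb =>
      intro x y hxy
      have : y = (⟨a x, hp.adj ha _ x.2⟩ : p) + ⟨b x, hp.adj hb _ x.2⟩ := Subtype.ext hxy
      rw [this, map_add, Submodule.coe_add, iha x ⟨a x, hp.adj ha _ x.2⟩ rfl,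
        ihb x ⟨b x, hp.adj hb _ x.2⟩ rfl]; rfl
    | mul a b ha hb iha ihb =>
      intro x y hxy
      rw [iha ⟨b x, hp.adj hb _ x.2⟩ y hxy, ihb x ⟨b x, hp.adj hb _ x.2⟩ rfl]; rfl
  exact ⟨{ toFun := fun x => f x
           invFun := fun x => f.symm x
           left_inv := fun x => f.symm_apply_apply x
           right_inv := fun x => f.apply_symm_apply x
           map_add' := fun x y => f.map_add x y
           map_smul' := fun a x => Subtype.ext (key a a.2 x _ rfl) }⟩

lemma iso_ofA {p q : Submodule ℂ V} (hp : Inv π N p) (hq : Inv π N q)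
    (e : toA p hp ≃ₗ[RA π N] toA q hq) : Iso π N p q := by
  refine ⟨{ toFun := fun x => e x
            invFun := fun x => e.symm x
            left_inv := fun x => e.symm_apply_apply x
            right_inv := fun x => e.apply_symm_apply x
            map_add' := fun x y => e.map_add x y
            map_smul' := fun c x => e.map_smul (algebraMap ℂ (RA π N) c) x }, ?_⟩
  intro n hn x y hxy
  have h1 : y = (⟨π n x, hp n hn _ x.2⟩ : p) := Subtype.ext hxy
  have h2 := e.map_smul (⟨π n, Algebra.subset_adjoin ⟨n, hn, rfl⟩⟩ : RA π N) x
  rw [h1]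
  exact congrArg Subtype.val h2

lemma comp_le {p : Submodule ℂ V} (hp : Inv π N p) :
    Comp π N p ≤ ofA (isotypicComponent (RA π N) V (toA p hp)) := by
  refine sSup_le ?_
  rintro q ⟨hq, hi⟩ x hx
  have : toA q hq ≤ isotypicComponent (RA π N) V (toA p hp) := le_sSup (hi.toA hq hp)
  exact this hx

lemma disj {W : Submodule ℂ V} (hW : Inv π N W) (hWs : Smp π N W) :
    Disjoint (Comp π N W)
      (sSup {c | ∃ q, Inv π N q ∧ Smp π N q ∧ ¬ Iso π N q W ∧ c = Comp π N q}) := by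
  have := hWs.toA hW
  rw [Submodule.disjoint_def]
  intro x hx hx'
  have hd := sSupIndep_isotypicComponents (RA π N) V
    (a := isotypicComponent (RA π N) V (toA W hW)) ⟨_, hWs.toA hW, rfl⟩
  rw [Submodule.disjoint_def] at hd
  refine hd x (comp_le hW hx) ?_
  have : sSup {c | ∃ q, Inv π N q ∧ Smp π N q ∧ ¬ Iso π N q W ∧ c = Comp π N q} ≤
    ofA (sSup (isotypicComponents (RA π N) V \ {isotypicComponent (RA π N) V (toA W hW)})) := by
    refine sSup_le ?_
    rintro _ ⟨q, hq, hqs, hi, rfl⟩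
    refine (comp_le hq).trans ?_
    have hle : isotypicComponent (RA π N) V (toA q hq) ≤
        sSup (isotypicComponents (RA π N) V \ {isotypicComponent (RA π N) V (toA W hW)}) := by
      refine le_sSup ⟨⟨_, hqs.toA hq, rfl⟩, fun heq => hi ?_⟩
      have := hqs.toA hq
      have hl := (toA q hq).le_isotypicComponent
      rw [Set.mem_singleton_iff.1 heq] at hl
      obtain ⟨e⟩ := isIsotypicOfType_submodule_iff.mp
        (IsIsotypicOfType.isotypicComponent (RA π N) V (toA W hW)) _ hl
      exact iso_ofA hq hW e
    exact fun y hy => hle hy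
  exact this hx'

variable (hc : ∀ m : M, ∀ n ∈ N, ∃ n' ∈ N, n * m = m * n')
  (hc' : ∀ m : M, ∀ n ∈ N, ∃ n' ∈ N, m * n = n' * m)

lemma rep_comm {a b c d : M} (h : a * b = c * d) (v : V) : π a (π b v) = π c (π d v) := by
  rw [← Module.End.mul_apply, ← Module.End.mul_apply, ← map_mul, ← map_mul, h]

include hc in
lemma Inv.map {p : Submodule ℂ V} (hp : Inv π N p) (m : M) : Inv π N (p.map (π m)) := by
  rintro n hn _ ⟨w, hw, rfl⟩
  obtain ⟨n', hn', h⟩ := hc m n hn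
  exact ⟨π n' w, hp n' hn' w hw, (rep_comm h w).symm⟩

include hc' in
lemma inv_comap {p q : Submodule ℂ V} (hp : Inv π N p) (hq : Inv π N q) (m : M) :
    Inv π N (p ⊓ q.comap (π m)) := by
  rintro n hn v ⟨hv, hv'⟩
  refine ⟨hp n hn v hv, ?_⟩
  obtain ⟨n', hn', h⟩ := hc' m n hn
  change π m (π n v) ∈ q
  rw [rep_comm h v]
  exact hq n' hn' _ hv'

include hc' in
lemma Smp.map {p : Submodule ℂ V} (hp : Inv π N p) (hs : Smp π N p) (m : M)
    (h0 : p.map (π m) ≠ ⊥) : Smp π N (p.map (π m)) := by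
  refine ⟨h0, fun q hq hqi => ?_⟩
  rcases hs.2 _ inf_le_left (inv_comap hc' hp hqi m) with h | h
  · left
    refine (Submodule.eq_bot_iff _).2 fun x hx => ?_
    obtain ⟨w, hw, rfl⟩ := hq hx
    have : w ∈ p ⊓ q.comap (π m) := ⟨hw, hx⟩
    rw [h, Submodule.mem_bot] at this
    rw [this, map_zero]
  · right
    refine le_antisymm hq (Submodule.map_le_iff_le_comap.2 ?_)
    rw [← h]; exact inf_le_right

include hc' in
lemma map_inj {p : Submodule ℂ V} (hp : Inv π N p) (hs : Smp π N p) (m : M)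
    (h0 : p.map (π m) ≠ ⊥) : Function.Bijective ((π m).submoduleMap p) := by
  refine ⟨?_, (π m).submoduleMap_surjective p⟩
  rw [← LinearMap.ker_eq_bot, LinearMap.ker_eq_bot']
  intro x hx
  have hx' : π m x = 0 := congrArg Subtype.val hx
  have hb : Inv π N (⊥ : Submodule ℂ V) := by
    intro n _ v hv
    rw [Submodule.mem_bot] at hv ⊢
    rw [hv, map_zero]
  rcases hs.2 _ inf_le_left (inv_comap hc' hp hb m) with h | h
  · have : (x : V) ∈ p ⊓ (⊥ : Submodule ℂ V).comap (π m) := ⟨x.2, hx'⟩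
    rw [h, Submodule.mem_bot] at this
    exact Subtype.ext this
  · refine absurd ?_ h0
    rw [eq_bot_iff, Submodule.map_le_iff_le_comap, ← h]
    exact inf_le_right

include hc hc' in
lemma Iso.map {p q : Submodule ℂ V} (hp : Inv π N p) (hs : Smp π N p)
    (hq : Inv π N q) (hqs : Smp π N q) (m : M)
    (h0 : p.map (π m) ≠ ⊥) (h1 : q.map (π m) ≠ ⊥) (hi : Iso π N p q) :
    Iso π N (p.map (π m)) (q.map (π m)) := by
  obtain ⟨f, hf⟩ := hi
  let ep := LinearEquiv.ofBijective _ (map_inj hc' hp hs m h0)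
  let eq := LinearEquiv.ofBijective _ (map_inj hc' hq hqs m h1)
  refine ⟨(ep.symm.trans f).trans eq, fun n hn x y hxy => ?_⟩
  obtain ⟨u, rfl⟩ := ep.surjective x
  obtain ⟨w, rfl⟩ := ep.surjective y
  obtain ⟨n', hn', h⟩ := hc m n hn
  have hw : w = ⟨π n' u, hp n' hn' _ u.2⟩ := by
    apply ep.injective
    apply Subtype.ext
    rw [hxy]
    exact rep_comm (π := π) h (u : V)
  simp only [LinearEquiv.trans_apply, LinearEquiv.symm_apply_apply]
  change π m (f w) = π n (π m (f u))
  rw [rep_comm h, hf n' hn' u w (by rw [hw])]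

end Stmt17Aux

/-- Let `M` be a finite monoid with `ℂ[M]` semisimple, `N` a centric submonoid, `(π, V)` a
simple `ℂ[M]`-module and `(σ, W)` a simple `ℂ[N]`-submodule of the restriction of `V` to `N`.
Let `W̃` be the `σ`-isotypic component of `V` as a `ℂ[N]`-module and
`I = {m ∈ M : π(m)(W̃) ⊆ W̃}`.  Then `I` is a submonoid of `M` and `W̃` is a simple
`ℂ[I]`-module. -/
theorem stmt17 {M : Type*} [Monoid M] [Finite M]
    (hM : IsSemisimpleRing (MonoidAlgebra ℂ M))
    (N : Submonoid M)
    (hcentric : ∀ m : M, {x : M | ∃ n ∈ N, x = n * m} = {x : M | ∃ n ∈ N, x = m * n})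
    {V : Type*} [AddCommGroup V] [Module ℂ V]
    (π : Representation ℂ M V)
    (hVnt : Nontrivial V)
    (hVsimple : ∀ p : Submodule ℂ V, (∀ (m : M), ∀ v ∈ p, π m v ∈ p) → p = ⊥ ∨ p = ⊤)
    (W : Submodule ℂ V)
    (hWinv : ∀ n ∈ N, ∀ v ∈ W, π n v ∈ W)
    (hWne : W ≠ ⊥)
    (hWsimple : ∀ p : Submodule ℂ V, p ≤ W →
      (∀ n ∈ N, ∀ v ∈ p, π n v ∈ p) → p = ⊥ ∨ p = W)
    (Wt : Submodule ℂ V)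
    (hWt : Wt = sSup {p : Submodule ℂ V |
      (∀ n ∈ N, ∀ v ∈ p, π n v ∈ p) ∧ p ≠ ⊥ ∧
      (∀ q : Submodule ℂ V, q ≤ p → (∀ n ∈ N, ∀ v ∈ q, π n v ∈ q) → q = ⊥ ∨ q = p) ∧
      (∃ f : ↥p ≃ₗ[ℂ] ↥W, ∀ (n : M), n ∈ N → ∀ (x : ↥p)
        (hx : π n (x : V) ∈ p) (hy : π n ((f x : W) : V) ∈ W),
        f ⟨π n (x : V), hx⟩ = ⟨π n ((f x : W) : V), hy⟩)})
    (I : Set M) (hI : I = {m : M | ∀ v ∈ Wt, π m v ∈ Wt}) :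
    ((1 : M) ∈ I ∧ ∀ a ∈ I, ∀ b ∈ I, a * b ∈ I) ∧
    (Wt ≠ ⊥ ∧ ∀ p : Submodule ℂ V, p ≤ Wt →
      (∀ m ∈ I, ∀ v ∈ p, π m v ∈ p) → p = ⊥ ∨ p = Wt) := by
  classical
  have hc : ∀ m : M, ∀ n ∈ N, ∃ n' ∈ N, n * m = m * n' := fun m n hn => by
    have : n * m ∈ {x : M | ∃ n ∈ N, x = n * m} := ⟨n, hn, rfl⟩
    rw [hcentric] at this
    exact this
  have hc' : ∀ m : M, ∀ n ∈ N, ∃ n' ∈ N, m * n = n' * m := fun m n hn => by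
    have : m * n ∈ {x : M | ∃ n ∈ N, x = m * n} := ⟨n, hn, rfl⟩
    rw [← hcentric] at this
    exact this
  have hWi : Stmt17Aux.Inv π N W := hWinv
  have hWs : Stmt17Aux.Smp π N W := ⟨hWne, hWsimple⟩
  have hWt' : Wt = sSup {p | Stmt17Aux.Inv π N p ∧ Stmt17Aux.Smp π N p ∧
      Stmt17Aux.Iso π N p W} := by
    rw [hWt]
    congr 1
    ext p
    constructor
    · rintro ⟨h1, h2, h3, f, hf⟩
      refine ⟨h1, ⟨h2, h3⟩, f, fun n hn x y hxy => ?_⟩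
      have := hf n hn x (h1 n hn _ x.2) (hWinv n hn _ (f x).2)
      have hy : y = ⟨π n x, h1 n hn _ x.2⟩ := Subtype.ext hxy
      rw [hy, this]
    · rintro ⟨h1, ⟨h2, h3⟩, f, hf⟩
      exact ⟨h1, h2, h3, f, fun n hn x hx hy => Subtype.ext (hf n hn x _ rfl)⟩
  have hWle : W ≤ Wt := by
    rw [hWt']
    exact le_sSup ⟨hWi, hWs, LinearEquiv.refl ℂ W, fun n hn x y hxy => hxy⟩
  subst hI
  refine ⟨⟨?_, ?_⟩, ?_, ?_⟩
  · intro v hv; simpa using hv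
  · intro a ha b hb v hv
    rw [map_mul]
    exact ha _ (hb v hv)
  · intro h
    rw [h] at hWle
    exact hWne (le_bot_iff.1 hWle)
  intro p hp hpI
  by_cases hp0 : p = ⊥
  · exact Or.inl hp0
  right
  set C := sSup {c | ∃ q, Stmt17Aux.Inv π N q ∧ Stmt17Aux.Smp π N q ∧
    ¬ Stmt17Aux.Iso π N q W ∧ c = Stmt17Aux.Comp π N q} with hC
  have hdisj : Disjoint Wt C := by
    refine (Stmt17Aux.disj hWi hWs).mono_left ?_
    rw [hWt']
    exact sSup_le_sSup fun q hq => ⟨hq.1, hq.2.2⟩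
  have hX : (⨆ m : M, p.map (π m)) = ⊤ := by
    refine (hVsimple _ ?_).resolve_left ?_
    · intro m v hv
      have : (⨆ m : M, p.map (π m)) ≤ (⨆ m : M, p.map (π m)).comap (π m) := by
        refine iSup_le fun m' => ?_
        rintro _ ⟨w, hw, rfl⟩
        refine Submodule.mem_iSup_of_mem (m * m') ⟨w, hw, ?_⟩
        rw [map_mul]; rfl
      exact this hv
    · intro h
      apply hp0
      rw [eq_bot_iff, ← h]
      intro v hv
      exact Submodule.mem_iSup_of_mem 1 ⟨v, hv, by simp⟩
  have hle : (⨆ m : M, p.map (π m)) ≤ p ⊔ C := by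
    refine iSup_le fun m => ?_
    by_cases hm : ∀ v ∈ Wt, π m v ∈ Wt
    · refine le_sup_of_le_left ?_
      rintro _ ⟨w, hw, rfl⟩
      exact hpI m hm w hw
    · refine le_sup_of_le_right ((Submodule.map_mono hp).trans ?_)
      have : ∃ p0, (Stmt17Aux.Inv π N p0 ∧ Stmt17Aux.Smp π N p0 ∧ Stmt17Aux.Iso π N p0 W) ∧
          ¬ p0.map (π m) ≤ Wt := by
        by_contra! hcon
        apply hm
        have : Wt ≤ Wt.comap (π m) := by
          conv_lhs => rw [hWt']
          exact sSup_le fun q hq => Submodule.map_le_iff_le_comap.1 (hcon q hq)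
        exact fun v hv => this hv
      obtain ⟨p0, ⟨h1, h2, h3⟩, h4⟩ := this
      have h0 : p0.map (π m) ≠ ⊥ := fun h => h4 (h ▸ bot_le)
      have hi := h1.map hc m
      have hs := h2.map hc' h1 m h0
      refine le_trans ?_ (le_sSup (a := Stmt17Aux.Comp π N (p0.map (π m)))
        ⟨_, hi, hs, fun hiso => h4 ?_, rfl⟩)
      · rw [Submodule.map_le_iff_le_comap, hWt']
        refine sSup_le ?_
        rintro q ⟨g1, g2, g3⟩
        rw [← Submodule.map_le_iff_le_comap]
        by_cases hq0 : q.map (π m) = ⊥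
        · rw [hq0]; exact bot_le
        · exact le_sSup ⟨g1.map hc m,
            Stmt17Aux.Iso.map hc hc' g1 g2 h1 h2 m hq0 h0 (g3.trans (h3.symm h1))⟩
      · rw [hWt']
        exact le_sSup ⟨hi, hs, hiso⟩
  refine le_antisymm hp fun v hv => ?_
  have hv' : v ∈ p ⊔ C := hle (hX ▸ Submodule.mem_top)
  obtain ⟨a, ha, b, hb, rfl⟩ := Submodule.mem_sup.1 hv'
  have hb' : b ∈ Wt := by simpa using Wt.sub_mem hv (hp ha)
  rw [Submodule.disjoint_def.1 hdisj b hb' hb, add_zero]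
  exact ha
end

section
/- Let M1 and M2 be finite monoids whose complex monoid algebras ℂ[M1] and ℂ[M2] are semisimple rings, let W be a finite-dimensional complex vector space, and let ρ : M1 × M2 → End_ℂ(W) be a monoid homomorphism into the multiplicative monoid of linear endomorphisms of W. Let A be the ℂ-subalgebra of End_ℂ(W) generated by {ρ(m1, 1) : m1 ∈ M1} and B the ℂ-subalgebra generated by {ρ(1, m2) : m2 ∈ M2}. Then B equals the centralizer of A in End_ℂ(W) if and only if A equals the centralizer of B in End_ℂ(W). -/
theorem dc_aux {W : Type*} [AddCommGroup W] [Module ℂ W] [FiniteDimensional ℂ W]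
    (A : Subalgebra ℂ (Module.End ℂ W)) (hA : IsSemisimpleRing A) :
    Subalgebra.centralizer ℂ (Subalgebra.centralizer ℂ (A : Set (Module.End ℂ W)) :
      Set (Module.End ℂ W)) = A := by
  refine le_antisymm ?_ (Subalgebra.le_centralizer_centralizer ℂ)
  intro f hf
  rw [Subalgebra.mem_centralizer_iff] at hf
  let F : Module.End (Module.End A W) W :=
    { toFun := f
      map_add' := f.map_add
      map_smul' := by
        intro g x
        have hg : g.restrictScalars ℂ ∈
            Subalgebra.centralizer ℂ (A : Set (Module.End ℂ W)) := by
          rw [Subalgebra.mem_centralizer_iff]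
          intro a ha
          ext w
          exact (g.map_smul (⟨a, ha⟩ : A) w).symm
        exact (LinearMap.congr_fun (hf _ hg) x).symm }
  obtain ⟨s, hs⟩ := (Module.finite_def (R := ℂ) (M := W)).1 inferInstance
  obtain ⟨r, hr⟩ := jacobson_density (R := A) F s
  have : f = (r : Module.End ℂ W) := by
    refine LinearMap.ext_on hs ?_
    intro x hx
    exact hr x hx
  rw [this]
  exact r.2

theorem ss_aux {M : Type*} [Monoid M] (h : IsSemisimpleRing (MonoidAlgebra ℂ M))
    {R : Type*} [Ring R] [Algebra ℂ R] (f : M →* R) :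
    IsSemisimpleRing (Algebra.adjoin ℂ (Set.range f)) := by
  have e : Algebra.adjoin ℂ (Set.range f) = (MonoidAlgebra.lift ℂ R M f).range := by
    apply le_antisymm
    · rw [Algebra.adjoin_le_iff]
      rintro _ ⟨m, rfl⟩
      exact ⟨MonoidAlgebra.of ℂ M m, by simp⟩
    · rintro _ ⟨x, rfl⟩
      change MonoidAlgebra.lift ℂ R M f x ∈ _
      rw [MonoidAlgebra.lift_apply]
      exact Subalgebra.sum_mem _ fun m _ =>
        Subalgebra.smul_mem _ (Algebra.subset_adjoin (Set.mem_range_self m)) _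
  rw [e]
  exact RingHom.isSemisimpleRing_of_surjective
    (MonoidAlgebra.lift ℂ R M f).rangeRestrict.toRingHom
    (MonoidAlgebra.lift ℂ R M f).rangeRestrict_surjective

/-- Double-commutant symmetry: let `M₁, M₂` be finite monoids with semisimple complex monoid
algebras, `W` a finite-dimensional complex vector space and `ρ : M₁ × M₂ → End_ℂ(W)` a monoid
homomorphism.  With `A` the subalgebra generated by the `ρ(m₁, 1)` and `B` the subalgebra
generated by the `ρ(1, m₂)`, `B` is the centralizer of `A` iff `A` is the centralizer of `B`. -/
theorem stmt19 {M1 M2 : Type*} [Monoid M1] [Monoid M2] [Finite M1] [Finite M2]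
    (h1 : IsSemisimpleRing (MonoidAlgebra ℂ M1))
    (h2 : IsSemisimpleRing (MonoidAlgebra ℂ M2))
    {W : Type*} [AddCommGroup W] [Module ℂ W] [FiniteDimensional ℂ W]
    (ρ : (M1 × M2) →* Module.End ℂ W)
    (A B : Subalgebra ℂ (Module.End ℂ W))
    (hA : A = Algebra.adjoin ℂ (Set.range fun m1 : M1 => ρ (m1, 1)))
    (hB : B = Algebra.adjoin ℂ (Set.range fun m2 : M2 => ρ (1, m2))) :
    B = Subalgebra.centralizer ℂ (A : Set (Module.End ℂ W)) ↔
      A = Subalgebra.centralizer ℂ (B : Set (Module.End ℂ W)) := by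
  have hA' : IsSemisimpleRing A := by
    rw [hA]; exact ss_aux h1 (ρ.comp (MonoidHom.inl M1 M2))
  have hB' : IsSemisimpleRing B := by
    rw [hB]; exact ss_aux h2 (ρ.comp (MonoidHom.inr M1 M2))
  constructor
  · intro h
    rw [h, dc_aux A hA']
  · intro h
    rw [h, dc_aux B hB']
end
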